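/- arXiv:2202.01551 — 6 statements merged into one kernel-verified Lean document; each statement's English description precedes it below -/
import Mathlib

section
/- Assume that either (H is finite and H_k is H_l-injective for all k, l ∈ Ω with k ≼ l) or (S is a division ring and H is a finite dimensional left S-module). Then H satisfies the MacWilliams extension property for P-support. -/
/-!
Finite modules and finite-dimensional vector spaces are Artinian, and over a division ring every
module is injective relative to every other. So let `H` be Artinian, with `H k` injective relative
to `H l` for `k ≤ l`.

A map `f` on a code preserves `P`-support exactly when, for every `k` and every codeword `x` that
vanishes strictly above `k`, the coordinates `f x k` and `x k` vanish together. On those codewords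
`f x k` is therefore an injective function of `x k`, and the crux is to extend it to an injective
endomorphism of `H k`. The rest of the `k`-th coordinate of `f` depends only on the coordinates
`x i` with `k < i`, and extends by relative injectivity. So `f` extends to a triangular
endomorphism of `H` with injective diagonal. It preserves `P`-support, hence is injective, hence
bijective since `H` is Artinian.

For the crux, let `M` be Artinian and quasi-injective. By Zorn's lemma an injective partial
endomorphism of `M` has a maximal injective extension. Its domain contains every simple submodule,
so any extension of it to all of `M` is injective: a nonzero kernel would contain a simple
submodule, on which the partial map is already injective.
-/

def idl {Ω : Type*} [PartialOrder Ω] (B : Set Ω) : Set Ω := {a | ∃ b ∈ B, a ≤ b}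

def hsupp {Ω : Type*} {H : Ω → Type*} [∀ i, Zero (H i)] (β : ∀ i, H i) : Set Ω :=
  {i | β i ≠ 0}

def MEPsupp (S : Type*) [Ring S] {Ω : Type*} [PartialOrder Ω] (H : Ω → Type*)
    [∀ i, AddCommGroup (H i)] [∀ i, Module S (H i)] : Prop :=
  ∀ C : Submodule S (∀ i, H i), ∀ f : C →ₗ[S] (∀ i, H i),
    (∀ x : C, idl (hsupp (f x)) = idl (hsupp (x : ∀ i, H i))) →
    ∃ φ : (∀ i, H i) ≃ₗ[S] (∀ i, H i),
      (∀ α : ∀ i, H i, idl (hsupp (φ α)) = idl (hsupp α)) ∧ ∀ x : C, φ (x : ∀ i, H i) = f x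

/-- `RelInjective S X Y` says that the `S`-module `Y` is `X`-injective; `RelInjective S M M` is
quasi-injectivity of `M`. -/
def RelInjective (S X Y : Type*) [Ring S] [AddCommGroup X] [Module S X] [AddCommGroup Y]
    [Module S Y] : Prop :=
  ∀ A : Submodule S X, ∀ f : A →ₗ[S] Y, ∃ g : X →ₗ[S] Y, ∀ a : A, g a = f a

section RelInjective

variable {S C X Y M N : Type*} [Ring S] [AddCommGroup C] [Module S C] [AddCommGroup X] [Module S X]
  [AddCommGroup Y] [Module S Y] [AddCommGroup M] [Module S M] [AddCommGroup N] [Module S N]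

theorem RelInjective.of_isSemisimpleModule [IsSemisimpleModule S X] : RelInjective S X Y := by
  intro A f
  obtain ⟨g, hg⟩ := IsSemisimpleModule.extension_property A.subtype A.subtype_injective f
  exact ⟨g, LinearMap.congr_fun hg⟩

theorem exists_comp_rangeRestrict_eq {r : C →ₗ[S] X} {p : C →ₗ[S] Y}
    (h : LinearMap.ker r ≤ LinearMap.ker p) :
    ∃ q : LinearMap.range r →ₗ[S] Y, q ∘ₗ r.rangeRestrict = p := by
  refine ⟨(LinearMap.ker r).liftQ p h ∘ₗ r.quotKerEquivRange.symm, LinearMap.ext fun c ↦ ?_⟩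
  have hc : r.quotKerEquivRange.symm (r.rangeRestrict c) = (LinearMap.ker r).mkQ c :=
    r.quotKerEquivRange.symm_apply_eq.2 rfl
  simp [hc]

theorem RelInjective.exists_comp_eq (hXY : RelInjective S X Y) {r : C →ₗ[S] X} {p : C →ₗ[S] Y}
    (h : LinearMap.ker r ≤ LinearMap.ker p) : ∃ g : X →ₗ[S] Y, g ∘ₗ r = p := by
  obtain ⟨q, rfl⟩ := exists_comp_rangeRestrict_eq h
  obtain ⟨g, hg⟩ := hXY _ q
  exact ⟨g, LinearMap.ext fun c ↦ hg (r.rangeRestrict c)⟩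

theorem exists_sum_comp_eq {ι : Type*} {X : ι → Type*} [∀ i, AddCommGroup (X i)]
    [∀ i, Module S (X i)] {s : Finset ι} (hX : ∀ i ∈ s, RelInjective S (X i) Y)
    (r : ∀ i, C →ₗ[S] X i) (p : C →ₗ[S] Y)
    (h : ⨅ i ∈ s, LinearMap.ker (r i) ≤ LinearMap.ker p) :
    ∃ g : ∀ i, X i →ₗ[S] Y, ∑ i ∈ s, g i ∘ₗ r i = p := by
  classical
  induction s using Finset.induction_on generalizing p with
  | empty =>
    have hp : p = 0 := by simpa [LinearMap.ker_eq_top] using h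
    exact ⟨0, by simp [hp]⟩
  | insert j s hj ih =>
    let D := ⨅ i ∈ s, LinearMap.ker (r i)
    obtain ⟨q, hq⟩ : ∃ q, q ∘ₗ r j ∘ₗ D.subtype = p ∘ₗ D.subtype := by
      refine (hX j (Finset.mem_insert_self j s)).exists_comp_eq fun c hc ↦ h ?_
      rw [Finset.iInf_insert]
      exact ⟨hc, c.2⟩
    obtain ⟨g, hg⟩ := ih (fun i hi ↦ hX i (Finset.mem_insert_of_mem hi)) (p - q ∘ₗ r j)
      fun c hc ↦ sub_eq_zero.2 (LinearMap.congr_fun hq ⟨c, hc⟩).symm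
    refine ⟨Function.update g j q, ?_⟩
    have hs : ∑ i ∈ s, Function.update g j q i ∘ₗ r i = ∑ i ∈ s, g i ∘ₗ r i :=
      Finset.sum_congr rfl fun i hi ↦ by
        rw [Function.update_of_ne (ne_of_mem_of_not_mem hi hj)]
    rw [Finset.sum_insert hj, Function.update_self, hs, hg, add_sub_cancel]

-- The trace `W` of `T` is fully invariant, so if `W ≤ range f`, then `f⁻¹` restricts to an
-- injective endomorphism of the Artinian module `W`; it is onto, whence `T ≤ W ≤ A`.
theorem exists_not_range_le_range [IsArtinian S M] {A T : Submodule S M} {f : A →ₗ[S] M}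
    (hf : Function.Injective f) (hTA : ¬ T ≤ A) :
    ∃ u : T →ₗ[S] M, ¬ LinearMap.range u ≤ LinearMap.range f := by
  by_contra! hrange
  let W : Submodule S M := ⨆ u : T →ₗ[S] M, LinearMap.range u
  have hW (u : T →ₗ[S] M) (t : T) : u t ∈ W := Submodule.mem_iSup_of_mem u ⟨t, rfl⟩
  let e := LinearEquiv.ofInjective f hf
  let ρ : W →ₗ[S] M := A.subtype ∘ₗ e.symm.toLinearMap ∘ₗ Submodule.inclusion (iSup_le hrange)
  have hρW (w : W) : ρ w ∈ W := by
    suffices h : W ≤ (W.comap ρ).map W.subtype by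
      obtain ⟨_, hw', hww'⟩ := h w.2
      rwa [← Subtype.ext hww']
    refine iSup_le fun u ↦ ?_
    rintro _ ⟨t, rfl⟩
    exact ⟨⟨u t, hW u t⟩, hW (ρ ∘ₗ u.codRestrict W (hW u)) t, rfl⟩
  have hρ : Function.Injective ρ :=
    A.subtype_injective.comp (e.symm.injective.comp (Submodule.inclusion_injective _))
  have hρ' : Function.Injective (ρ.codRestrict W hρW) := .of_comp (f := W.subtype) hρ
  refine hTA fun t ht ↦ ?_
  obtain ⟨w, hw⟩ := IsArtinian.surjective_of_injective_endomorphism _ hρ'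
    ⟨t, hW T.subtype ⟨t, ht⟩⟩
  rw [← show ρ w = t from congrArg Subtype.val hw]
  exact Subtype.property _

theorem injective_sup_of_disjoint {F G : M →ₗ.[S] N} (hF : Function.Injective F)
    (hG : Function.Injective G) (hdom : Disjoint F.domain G.domain)
    (hran : Disjoint (LinearMap.range F.toFun) (LinearMap.range G.toFun)) :
    Function.Injective (F.sup G (LinearPMap.sup_h_of_disjoint F G hdom)) := by
  refine (injective_iff_map_eq_zero (LinearPMap.toFun _)).2 fun z hz ↦ ?_
  obtain ⟨a, ha, b, hb, hab⟩ := Submodule.mem_sup.1 z.2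
  have hsum : F ⟨a, ha⟩ + G ⟨b, hb⟩ = 0 := by
    rw [← LinearPMap.sup_apply (LinearPMap.sup_h_of_disjoint F G hdom) ⟨a, ha⟩ ⟨b, hb⟩ z hab]
    exact hz
  have hFa : F ⟨a, ha⟩ = 0 := by
    refine Submodule.disjoint_def.1 hran _ ⟨_, rfl⟩ ?_
    rw [eq_neg_of_add_eq_zero_left hsum]
    exact neg_mem ⟨_, rfl⟩
  have hGb : G ⟨b, hb⟩ = 0 := by simpa [hFa] using hsum
  have ha0 := (map_eq_zero_iff F.toFun hF).1 hFa
  have hb0 := (map_eq_zero_iff G.toFun hG).1 hGb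
  simp only [Submodule.mk_eq_zero] at ha0 hb0
  exact Subtype.ext (by simp [← hab, ha0, hb0])

theorem injective_sSup_of_isChain {c : Set (M →ₗ.[S] N)} (hc : IsChain (· ≤ ·) c)
    (hne : c.Nonempty) (hinj : ∀ F ∈ c, Function.Injective F) :
    Function.Injective (LinearPMap.sSup c hc.directedOn) := by
  refine (injective_iff_map_eq_zero (LinearPMap.toFun _)).2 fun z hz ↦ ?_
  obtain ⟨F, hFc, hzF⟩ := (LinearPMap.mem_domain_sSup_iff hne hc.directedOn).1 z.2
  have hFz : F ⟨z, hzF⟩ = 0 :=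
    (LinearPMap.sSup_apply hc.directedOn hFc ⟨z, hzF⟩).symm.trans hz
  have hz0 := (map_eq_zero_iff F.toFun (hinj F hFc)).1 hFz
  simpa using hz0

theorem exists_lt_injective_of_isAtom [IsArtinian S M] {F : M →ₗ.[S] M}
    (hF : Function.Injective F) {T : Submodule S M} (hT : IsAtom T) (hTF : ¬ T ≤ F.domain) :
    ∃ G : M →ₗ.[S] M, F < G ∧ Function.Injective G := by
  have : IsSimpleModule S T := isSimpleModule_iff_isAtom.2 hT
  obtain ⟨u, hu⟩ := exists_not_range_le_range hF hTF
  have hu_inj : Function.Injective u :=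
    u.injective_or_eq_zero.resolve_right fun h0 ↦ hu (by simp [h0])
  have hu_atom : IsAtom (LinearMap.range u) :=
    isSimpleModule_iff_isAtom.1 (.congr (LinearEquiv.ofInjective u hu_inj).symm)
  let U : M →ₗ.[S] M := ⟨T, u⟩
  have hdom : Disjoint F.domain U.domain := (hT.not_le_iff_disjoint.1 hTF).symm
  have hran := (hu_atom.not_le_iff_disjoint.1 hu).symm
  have hsup := LinearPMap.sup_h_of_disjoint F U hdom
  refine ⟨F.sup U hsup, lt_of_le_not_ge (F.left_le_sup U hsup) fun hle ↦ ?_,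
    injective_sup_of_disjoint (G := U) hF hu_inj hdom hran⟩
  exact hTF (le_sup_right.trans hle.1)

theorem exists_le_injective_forall_isAtom_le [IsArtinian S M] {F : M →ₗ.[S] M}
    (hF : Function.Injective F) :
    ∃ G : M →ₗ.[S] M, F ≤ G ∧ Function.Injective G ∧ ∀ T, IsAtom T → T ≤ G.domain := by
  obtain ⟨G, hFG, hG⟩ := zorn_le_nonempty₀ {G : M →ₗ.[S] M | Function.Injective G}
    (fun c hcs hc F₀ hF₀ ↦ ⟨LinearPMap.sSup c hc.directedOn,
      injective_sSup_of_isChain hc ⟨F₀, hF₀⟩ hcs, fun _ ↦ LinearPMap.le_sSup hc.directedOn⟩) F hF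
  refine ⟨G, hFG, hG.prop, fun T hT ↦ ?_⟩
  by_contra hTG
  obtain ⟨G', hlt, hG'⟩ := exists_lt_injective_of_isAtom hG.prop hT hTG
  exact hG.not_prop_of_gt hlt hG'

theorem injective_of_injective_domRestrict [IsAtomic (Submodule S M)] {A : Submodule S M}
    (hA : ∀ T, IsAtom T → T ≤ A) {g : M →ₗ[S] N} (hg : Function.Injective (g.domRestrict A)) :
    Function.Injective g := by
  rw [LinearMap.injective_domRestrict_iff] at hg
  rw [← LinearMap.ker_eq_bot]
  refine (eq_bot_or_exists_atom_le _).resolve_right ?_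
  rintro ⟨T, hT, hTg⟩
  exact hT.ne_bot (le_bot_iff.1 (hg (hA T hT) hTg))

theorem RelInjective.exists_injective_extend [IsArtinian S M] (hM : RelInjective S M M)
    {A : Submodule S M} {f : A →ₗ[S] M} (hf : Function.Injective f) :
    ∃ g : M →ₗ[S] M, Function.Injective g ∧ ∀ a : A, g a = f a := by
  obtain ⟨G, hFG, hG, hatoms⟩ := exists_le_injective_forall_isAtom_le (F := ⟨A, f⟩) hf
  obtain ⟨g, hg⟩ := hM G.domain G.toFun
  have hgG : g.domRestrict G.domain = G.toFun := LinearMap.ext hg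
  refine ⟨g, injective_of_injective_domRestrict hatoms (hgG ▸ hG), fun a ↦ ?_⟩
  exact (hg ⟨a, hFG.1 a.2⟩).trans (hFG.2 rfl).symm

theorem RelInjective.exists_injective_comp_eq [IsArtinian S M] (hM : RelInjective S M M)
    {r p : C →ₗ[S] M} (h : LinearMap.ker r = LinearMap.ker p) :
    ∃ g : M →ₗ[S] M, Function.Injective g ∧ g ∘ₗ r = p := by
  obtain ⟨q, rfl⟩ := exists_comp_rangeRestrict_eq h.le
  have hq : Function.Injective q := by
    rw [injective_iff_map_eq_zero]
    rintro ⟨_, c, rfl⟩ hc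
    exact Subtype.ext (h.ge hc)
  obtain ⟨g, hg, hgq⟩ := hM.exists_injective_extend hq
  exact ⟨g, hg, LinearMap.ext fun c ↦ hgq (r.rangeRestrict c)⟩

theorem RelInjective.exists_injective_comp_add_sum_eq [IsArtinian S M] (hM : RelInjective S M M)
    {ι : Type*} {X : ι → Type*} [∀ i, AddCommGroup (X i)] [∀ i, Module S (X i)] {s : Finset ι}
    (hX : ∀ i ∈ s, RelInjective S (X i) M) {r : C →ₗ[S] M} (r' : ∀ i, C →ₗ[S] X i)
    {p : C →ₗ[S] M} (h : ∀ c, (∀ i ∈ s, r' i c = 0) → (p c = 0 ↔ r c = 0)) :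
    ∃ (g : M →ₗ[S] M) (g' : ∀ i, X i →ₗ[S] M), Function.Injective g ∧
      g ∘ₗ r + ∑ i ∈ s, g' i ∘ₗ r' i = p := by
  let D := ⨅ i ∈ s, LinearMap.ker (r' i)
  have hD (c : C) (hc : c ∈ D) : p c = 0 ↔ r c = 0 := h c (by simpa [D] using hc)
  obtain ⟨g, hg, hgD⟩ := hM.exists_injective_comp_eq (r := r ∘ₗ D.subtype) (p := p ∘ₗ D.subtype)
    (Submodule.ext fun c ↦ (hD c c.2).symm)
  obtain ⟨g', hg'⟩ := exists_sum_comp_eq hX r' (p - g ∘ₗ r)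
    fun c hc ↦ sub_eq_zero.2 (LinearMap.congr_fun hgD ⟨c, hc⟩).symm
  exact ⟨g, g', hg, by rw [hg', add_sub_cancel]⟩

end RelInjective

section Poset

variable {Ω : Type*} [PartialOrder Ω]

theorem mem_idl_iff_mem {A : Set Ω} {k : Ω} (hA : ∀ i, k < i → i ∉ A) : k ∈ idl A ↔ k ∈ A :=
  ⟨fun ⟨b, hb, hkb⟩ ↦ hkb.eq_or_lt.elim (· ▸ hb) fun hlt ↦ (hA b hlt hb).elim,
    fun hk ↦ ⟨k, hk, le_rfl⟩⟩

-- The condition on the right says that `A` and `B` have the same maximal elements.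
theorem idl_eq_idl_iff [Finite Ω] {A B : Set Ω} :
    idl A = idl B ↔ ∀ k, (∀ i, k < i → i ∉ B) → (k ∈ A ↔ k ∈ B) := by
  constructor
  · intro h k hB
    have hA (i : Ω) (hki : k < i) (hi : i ∈ A) : False := by
      obtain ⟨b, hb, hib⟩ : i ∈ idl B := h ▸ ⟨i, hi, le_rfl⟩
      exact hB b (hki.trans_le hib) hb
    rw [← mem_idl_iff_mem hA, ← mem_idl_iff_mem hB, h]
  · intro h
    ext a
    constructor
    · rintro ⟨b, hb, hab⟩
      by_contra ha
      have hB (i : Ω) (hbi : b ≤ i) : i ∉ B := fun hi ↦ ha ⟨i, hi, hab.trans hbi⟩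
      exact hB b le_rfl ((h b fun i hi ↦ hB i hi.le).1 hb)
    · rintro ⟨b, hb, hab⟩
      obtain ⟨l, hbl, hl⟩ := B.toFinite.exists_le_maximal hb
      exact ⟨l, (h l fun i hi ↦ hl.not_prop_of_gt hi).2 hl.prop, hab.trans hbl⟩

variable {H H' : Ω → Type*}

theorem idl_hsupp_eq_iff [Finite Ω] [∀ i, Zero (H i)] [∀ i, Zero (H' i)] {α : ∀ i, H i}
    {β : ∀ i, H' i} :
    idl (hsupp α) = idl (hsupp β) ↔ ∀ k, (∀ i, k < i → β i = 0) → (α k = 0 ↔ β k = 0) := by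
  simp [idl_eq_idl_iff, hsupp, not_iff_not]

theorem eq_zero_of_idl_hsupp_zero_eq [∀ i, Zero (H i)] [∀ i, Zero (H' i)] {β : ∀ i, H' i}
    (h : idl (hsupp (0 : ∀ i, H i)) = idl (hsupp β)) : β = 0 := by
  ext k
  by_contra hk
  obtain ⟨b, hb, _⟩ : k ∈ idl (hsupp (0 : ∀ i, H i)) := h ▸ ⟨k, hk, le_rfl⟩
  exact hb rfl

variable {S : Type*} [Ring S] [∀ i, AddCommGroup (H i)] [∀ i, Module S (H i)]

theorem bijective_of_idl_hsupp_eq [IsArtinian S (∀ i, H i)] {ψ : (∀ i, H i) →ₗ[S] (∀ i, H i)}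
    (hψ : ∀ α, idl (hsupp (ψ α)) = idl (hsupp α)) : Function.Bijective ψ :=
  IsArtinian.bijective_of_injective_endomorphism ψ <|
    (injective_iff_map_eq_zero ψ).2 fun α hα ↦ eq_zero_of_idl_hsupp_zero_eq (hα ▸ hψ α)

end Poset

theorem stmt11_general {Ω : Type*} [Finite Ω] [PartialOrder Ω] {S : Type*} [Ring S]
    {H : Ω → Type*} [∀ i, AddCommGroup (H i)] [∀ i, Module S (H i)] [IsArtinian S (∀ i, H i)]
    (hinj : ∀ k l : Ω, k ≤ l → RelInjective S (H l) (H k)) : MEPsupp S H := by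
  classical
  have := Fintype.ofFinite Ω
  intro C f hf
  have hart (k : Ω) : IsArtinian S (H k) :=
    isArtinian_of_surjective _ (LinearMap.proj (R := S) (φ := H) k) (LinearMap.proj_surjective k)
  have hcoord (k : Ω) : ∃ (g : H k →ₗ[S] H k) (g' : ∀ i, H i →ₗ[S] H k), Function.Injective g ∧
      g ∘ₗ (LinearMap.proj k ∘ₗ C.subtype) +
        ∑ i with k < i, g' i ∘ₗ (LinearMap.proj i ∘ₗ C.subtype) = LinearMap.proj k ∘ₗ f :=
    (hinj k k le_rfl).exists_injective_comp_add_sum_eq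
      (fun i hi ↦ hinj k i (Finset.mem_filter.1 hi).2.le) _
      fun x hx ↦ idl_hsupp_eq_iff.1 (hf x) k fun i hi ↦ hx i (by simpa using hi)
  choose g g' hg hgf using hcoord
  let ψ : (∀ i, H i) →ₗ[S] (∀ i, H i) :=
    LinearMap.pi fun k ↦ g k ∘ₗ LinearMap.proj k + ∑ i with k < i, g' k i ∘ₗ LinearMap.proj i
  have hψ (α : ∀ i, H i) : idl (hsupp (ψ α)) = idl (hsupp α) := by
    refine idl_hsupp_eq_iff.2 fun k hα ↦ ?_
    have hsum : ∑ i with k < i, g' k i (α i) = 0 :=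
      Finset.sum_eq_zero fun i hi ↦ by rw [hα i (Finset.mem_filter.1 hi).2, map_zero]
    simp [ψ, hsum, map_eq_zero_iff (g k) (hg k)]
  refine ⟨.ofBijective ψ (bijective_of_idl_hsupp_eq hψ), hψ, fun x ↦ funext fun k ↦ ?_⟩
  simpa [ψ] using LinearMap.congr_fun (hgf k) x

theorem stmt11 {Ω : Type*} [Fintype Ω] [Nonempty Ω] [PartialOrder Ω]
    {S : Type*} [Ring S] {H : Ω → Type*} [∀ i, AddCommGroup (H i)] [∀ i, Module S (H i)]
    (hyp :
      -- either `H` is finite and `H k` is `H l`-injective for all `k ≼ l`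
      (Finite (∀ i, H i) ∧
        ∀ k l : Ω, k ≤ l →
          ∀ A : Submodule S (H l), ∀ f : A →ₗ[S] H k,
            ∃ g : H l →ₗ[S] H k, ∀ a : A, g a = f a) ∨
      -- or `S` is a division ring and `H` is a finite-dimensional left `S`-module
      (Nontrivial S ∧ (∀ a : S, a ≠ 0 → IsUnit a) ∧ Module.Finite S (∀ i, H i))) :
    MEPsupp S H := by
  rcases hyp with ⟨_, hinj⟩ | ⟨_, hunit, _⟩
  · exact stmt11_general hinj
  · let _ : DivisionRing S := .ofIsUnitOrEqZero fun a ↦ or_iff_not_imp_right.2 (hunit a)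
    exact stmt11_general fun _ _ _ ↦ .of_isSemisimpleModule
end

section
/- Let X be a set and Γ a finite collection of subsets of X with X ∈ Γ, closed under pairwise intersections, and with ∅ ∉ Γ. Let I and J be finite sets and let ((U_i)_{i∈I}, (V_j)_{j∈J}) ∈ Γ^I × Γ^J be a solution to the isometry equation. Then |I| = |J|. -/
/-!
A nonempty finite collection of members of an intersection-closed family that omits `∅` has a
common point. Evaluated at a point common to all `U i` and `V j`, the two sides of the isometry
equation count the index sets.
-/

theorem nonempty_iInter_of_infClosed {X ι : Type*} [Finite ι] [Nonempty ι] {Γ : Set (Set X)}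
    (hΓ : InfClosed Γ) (hempty : ∅ ∉ Γ) {A : ι → Set X} (hA : ∀ i, A i ∈ Γ) :
    (⋂ i, A i).Nonempty :=
  Set.nonempty_iff_ne_empty.mpr (ne_of_mem_of_not_mem (hΓ.iInf_mem_of_nonempty hA) hempty)

theorem sum_indicator_one_eq_card {X ι R : Type*} [Fintype ι] [AddCommMonoidWithOne R]
    {A : ι → Set X} {x : X} (hx : ∀ i, x ∈ A i) :
    ∑ i, (A i).indicator (fun _ => (1 : R)) x = Fintype.card ι := by
  simp [hx]

theorem stmt12_general {X R : Type*} [AddCommMonoidWithOne R] [CharZero R] {Γ : Set (Set X)}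
    (hΓ : InfClosed Γ) (hempty : ∅ ∉ Γ) {I J : Type*} [Fintype I] [Fintype J]
    {U : I → Set X} {V : J → Set X} (hU : ∀ i, U i ∈ Γ) (hV : ∀ j, V j ∈ Γ)
    (hsol : ∀ x, ∑ i, (U i).indicator (fun _ => (1 : R)) x =
      ∑ j, (V j).indicator (fun _ => (1 : R)) x) :
    Fintype.card I = Fintype.card J := by
  rcases isEmpty_or_nonempty (I ⊕ J) with hIJ | hIJ
  · obtain ⟨_, _⟩ := isEmpty_sum.mp hIJ
    simp only [Fintype.card_eq_zero]
  · have hUV : ∀ k, Sum.elim U V k ∈ Γ := Sum.forall.mpr ⟨hU, hV⟩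
    obtain ⟨x, hx⟩ := nonempty_iInter_of_infClosed hΓ hempty hUV
    obtain ⟨hxU, hxV⟩ := Sum.forall.mp (Set.mem_iInter.mp hx)
    have hcard : (Fintype.card I : R) = Fintype.card J :=
      calc (Fintype.card I : R)
        _ = ∑ i, (U i).indicator (fun _ => (1 : R)) x := (sum_indicator_one_eq_card hxU).symm
        _ = ∑ j, (V j).indicator (fun _ => (1 : R)) x := hsol x
        _ = Fintype.card J := sum_indicator_one_eq_card hxV
    exact Nat.cast_injective hcard

theorem stmt12 {X : Type*} (Γ : Finset (Set X))
    (hX : Set.univ ∈ Γ)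
    (hinter : ∀ A ∈ Γ, ∀ B ∈ Γ, A ∩ B ∈ Γ)
    (hempty : (∅ : Set X) ∉ Γ)
    {I J : Type*} [Fintype I] [Fintype J]
    (U : I → Set X) (V : J → Set X)
    (hU : ∀ i : I, U i ∈ Γ) (hV : ∀ j : J, V j ∈ Γ)
    (hsol : ∀ x : X,
      (∑ i : I, (U i).indicator (fun _ => (1 : ℤ)) x) =
        ∑ j : J, (V j).indicator (fun _ => (1 : ℤ)) x) :
    Fintype.card I = Fintype.card J :=
  have hΓ : InfClosed (Γ : Set (Set X)) := fun A hA B hB => hinter A hA B hB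
  stmt12_general hΓ hempty hU hV hsol
end

section
/- Let X be a set and Γ a finite collection of subsets of X with X ∈ Γ, closed under pairwise intersections (so that (Γ, ⊆) is a lattice, with Möbius function μ), and with ∅ ∉ Γ. Let Λ = {C ∈ Γ : C ≠ ⟨{x}⟩_Γ for all x ∈ X}, assume Λ ≠ ∅, and set n = min{ (1/2) Σ_{U ∈ Γ, U ⊆ W} |μ(U, W)| : W ∈ Λ }. Then there exists a nontrivial solution ((U_1, …, U_n), (V_1, …, V_n)) ∈ Γ^n × Γ^n to the isometry equation; and moreover, for any p, q ∈ ℕ and any nontrivial solution ((A_1, …, A_p), (B_1, …, B_q)) ∈ Γ^p × Γ^q, one has p = q ≥ n. -/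
/-!
Cancelling common sets and counting multiplicities turns a pair of tuples in `Γ` into an integer
weight `f` on `Γ`, and the isometry equation says that `∑ U ∋ x, f U = 0` for every point `x`, that
is, the upper sum `∑ U ⊇ C, f U` vanishes at every `C` of the form `⟨{x}⟩`.

For `W ∈ Λ` the weight `μ(·, W)` has upper sum `1` at `W` and `0` elsewhere, so its positive and
negative parts are a nontrivial solution. Conversely, if `f ≠ 0` solves the equation, choose `W`
minimal with nonzero upper sum `c`; then `W ∈ Λ`. The pushforward of `f` along `U ↦ U ∩ W` has the
same upper sums as `f` below `W` and zero upper sums elsewhere, so by Möbius inversion it is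
`c μ(·, W)`. A pushforward does not increase the `ℓ¹` norm, hence `∑ |μ(U, W)| ≤ ∑ |f U|`.

The tuples have equal length because, as `∅ ∉ Γ`, all members of `Γ` share a point, at which the
isometry equation compares the lengths.
-/

section Moebius

open Finset IncidenceAlgebra

variable {R α : Type*}

/-- The sum of `f` over the upper set generated by `a`: the transform that Möbius inversion from
above inverts. -/
def upperSum [Fintype α] [LE α] [DecidableLE α] [AddCommMonoid R] (f : α → R) (a : α) : R :=
  ∑ b with a ≤ b, f b

/-- The pushforward of the weight `f` along `u ↦ u ⊓ w`. -/
def infPushforward [Fintype α] [DecidableEq α] [Min α] [AddCommMonoid R] (f : α → R) (w a : α) :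
    R :=
  ∑ u with u ⊓ w = a, f u

section Inversion

variable [Fintype α] [PartialOrder α] [LocallyFiniteOrder α] [DecidableLE α] [Ring R]

lemma upperSum_mu [DecidableEq α] (a b : α) : upperSum (mu R · b) a = if a = b then 1 else 0 := by
  rw [← sum_Icc_mu_left, upperSum]
  refine (sum_subset (fun u hu ↦ by simp_all) fun u hu hu' ↦ ?_).symm
  exact apply_eq_zero_of_not_le (fun hub ↦ hu' (by simp_all)) _

lemma sum_mu_mul_upperSum [DecidableEq α] (f : α → R) (a : α) :
    ∑ b, mu R a b * upperSum f b = f a := by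
  have sum_mu (c : α) : ∑ b with b ≤ c, mu R a b = if a = c then 1 else 0 := by
    rw [← sum_Icc_mu_right]
    refine (sum_subset (fun u hu ↦ by simp_all) fun u hu hu' ↦ ?_).symm
    exact apply_eq_zero_of_not_le (fun hau ↦ hu' (by simp_all)) _
  calc ∑ b, mu R a b * upperSum f b
      = ∑ c, (∑ b with b ≤ c, mu R a b) * f c := by
        simp only [upperSum, mul_sum, sum_mul]
        exact sum_comm' (by simp)
    _ = f a := by simp [sum_mu]

lemma exists_minimal_upperSum_ne_zero {f : α → R} (hf : f ≠ 0) :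
    ∃ w, Minimal (upperSum f · ≠ 0) w := by
  classical
  have h_ne : ∃ a, upperSum f a ≠ 0 := by
    by_contra! h
    exact hf (funext fun a ↦ by simp [← sum_mu_mul_upperSum f a, h])
  exact exists_minimal_of_wellFoundedLT _ h_ne

end Inversion

section Pushforward

variable [Fintype α] [SemilatticeInf α] [DecidableEq α]

lemma upperSum_infPushforward [DecidableLE α] [AddCommMonoid R] (f : α → R) (w a : α) :
    upperSum (infPushforward f w) a = if a ≤ w then upperSum f a else 0 := by
  have h : upperSum (infPushforward f w) a = ∑ u with a ≤ u ⊓ w, f u := by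
    simpa [upperSum, infPushforward] using
      sum_fiberwise_eq_sum_filter univ ({b | a ≤ b} : Finset α) (· ⊓ w) f
  rw [h]
  split_ifs with haw <;> simp [haw, upperSum]

lemma sum_abs_infPushforward_le [AddCommGroup R] [LinearOrder R] [IsOrderedAddMonoid R]
    (f : α → R) (w : α) : ∑ a, |infPushforward f w a| ≤ ∑ a, |f a| :=
  calc ∑ a, |infPushforward f w a|
      ≤ ∑ a, ∑ u with u ⊓ w = a, |f u| := sum_le_sum fun _ _ ↦ abs_sum_le_sum_abs _ _
    _ = ∑ a, |f a| := sum_fiberwise _ _ _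

variable [LocallyFiniteOrder α] [DecidableLE α]

lemma infPushforward_eq_mu_mul [Ring R] {f : α → R} {w : α} (hw : Minimal (upperSum f · ≠ 0) w)
    (a : α) : infPushforward f w a = mu R a w * upperSum f w := by
  have h (b : α) : upperSum (infPushforward f w) b = if b = w then upperSum f w else 0 := by
    rw [upperSum_infPushforward]
    rcases eq_or_ne b w with rfl | hbw
    · simp
    · have hlt (hle : b ≤ w) : upperSum f b = 0 := by
        by_contra hb
        exact hbw (hw.eq_of_le hb hle)
      simp +contextual [hbw, hlt]
  rw [← sum_mu_mul_upperSum (infPushforward f w)]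
  simp [h]

theorem sum_abs_mu_mul_abs_upperSum_le [Ring R] [LinearOrder R] [IsOrderedRing R] {f : α → R}
    {w : α} (hw : Minimal (upperSum f · ≠ 0) w) :
    (∑ a, |mu R a w|) * |upperSum f w| ≤ ∑ a, |f a| :=
  calc (∑ a, |mu R a w|) * |upperSum f w|
      = ∑ a, |infPushforward f w a| := by
        simp only [sum_mul, infPushforward_eq_mu_mul hw, abs_mul]
    _ ≤ ∑ a, |f a| := sum_abs_infPushforward_le f w

theorem exists_upperSum_ne_zero_and_sum_abs_mu_le {f : α → ℤ} (hf : f ≠ 0) :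
    ∃ w, upperSum f w ≠ 0 ∧ ∑ a, |mu ℤ a w| ≤ ∑ a, |f a| := by
  obtain ⟨w, hw⟩ := exists_minimal_upperSum_ne_zero hf
  refine ⟨w, hw.prop, le_trans ?_ (sum_abs_mu_mul_abs_upperSum_le hw)⟩
  exact le_mul_of_one_le_right (sum_nonneg fun _ _ ↦ abs_nonneg _) (Int.one_le_abs hw.prop)

end Pushforward

end Moebius

section Multiplicity

open Finset

variable {ι κ α : Type*} [Fintype ι] [Fintype κ] [DecidableEq α]

/-- The multiplicity of `a` in the tuple `A` minus its multiplicity in the tuple `B`. -/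
def multDiff (A : ι → α) (B : κ → α) (a : α) : ℤ := #{i | A i = a} - #{j | B j = a}

lemma multDiff_eq_zero_iff {A : ι → α} {B : κ → α} :
    multDiff A B = 0 ↔ ∃ σ : ι ≃ κ, ∀ i, A i = B (σ i) := by
  constructor
  · intro h
    have hcard (a : α) : Fintype.card {i // A i = a} = Fintype.card {j // B j = a} := by
      simpa [multDiff, sub_eq_zero, Fintype.card_subtype] using congrFun h a
    exact ⟨.ofFiberEquiv fun a ↦ Fintype.equivOfCardEq (hcard a),
      fun i ↦ (Equiv.ofFiberEquiv_map _ i).symm⟩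
  · rintro ⟨σ, hσ⟩
    funext a
    simp only [multDiff, hσ, Pi.zero_apply, sub_eq_zero, Nat.cast_inj]
    exact card_equiv σ (by simp)

variable [Fintype α]

lemma sum_card_fiber_mul {R : Type*} [NonAssocSemiring R] (A : ι → α) (φ : α → R) :
    ∑ a, #{i | A i = a} * φ a = ∑ i, φ (A i) := by
  simpa using sum_fiberwise' univ A φ

lemma sum_multDiff_mul (A : ι → α) (B : κ → α) (φ : α → ℤ) :
    ∑ a, multDiff A B a * φ a = ∑ i, φ (A i) - ∑ j, φ (B j) := by
  simp only [multDiff, sub_mul, sum_sub_distrib, sum_card_fiber_mul]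

lemma sum_abs_multDiff_le (A : ι → α) (B : κ → α) :
    ∑ a, |multDiff A B a| ≤ Fintype.card ι + Fintype.card κ :=
  calc ∑ a, |multDiff A B a|
      ≤ ∑ a, ((#{i | A i = a} : ℤ) + #{j | B j = a}) :=
        sum_le_sum fun a _ ↦ (abs_sub _ _).trans (by simp)
    _ = Fintype.card ι + Fintype.card κ := by
        have hA := sum_card_fiber_mul A fun _ ↦ (1 : ℤ)
        have hB := sum_card_fiber_mul B fun _ ↦ (1 : ℤ)
        simp_all [sum_add_distrib]

lemma exists_card_fiber_eq {n : ℕ} {m : α → ℕ} (hm : ∑ a, m a = n) :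
    ∃ A : Fin n → α, ∀ a, #{i | A i = a} = m a := by
  let e : Fin n ≃ Σ a, Fin (m a) := (Fintype.equivFinOfCardEq (by simp [hm])).symm
  refine ⟨fun i ↦ (e i).1, fun a ↦ ?_⟩
  calc #{i | (e i).1 = a}
      = #{s : Σ a, Fin (m a) | s.1 = a} := card_equiv e (by simp)
    _ = m a := by
      rw [← Fintype.card_subtype, Fintype.card_congr (Equiv.sigmaSubtype a), Fintype.card_fin]

lemma exists_multDiff_eq {n : ℕ} {f : α → ℤ} (hsum : ∑ a, f a = 0)
    (habs : ∑ a, (f a).natAbs = 2 * n) : ∃ A B : Fin n → α, multDiff A B = f := by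
  have hsub : ((∑ a, (f a).toNat : ℕ) : ℤ) - (∑ a, (-f a).toNat : ℕ) = 0 := by
    push_cast
    simp only [← sum_sub_distrib, Int.toNat_sub_toNat_neg, hsum]
  have hadd : ∑ a, (f a).toNat + ∑ a, (-f a).toNat = 2 * n := by
    simp only [← sum_add_distrib, Int.toNat_add_toNat_neg_eq_natAbs, habs]
  obtain ⟨A, hA⟩ := exists_card_fiber_eq (n := n) (m := fun a ↦ (f a).toNat) (by lia)
  obtain ⟨B, hB⟩ := exists_card_fiber_eq (n := n) (m := fun a ↦ (-f a).toNat) (by lia)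
  exact ⟨A, B, funext fun a ↦ by rw [multDiff, hA, hB, Int.toNat_sub_toNat_neg]⟩

end Multiplicity

section Isometry

open Finset IncidenceAlgebra

variable {X ι κ : Type*} [Fintype ι] [Fintype κ]

/-- The pair of tuples `(A, B)` is a solution to the isometry equation `∑ᵢ 1_{Aᵢ} = ∑ⱼ 1_{Bⱼ}`. -/
def IsIsometrySolution (A : ι → Set X) (B : κ → Set X) : Prop :=
  ∀ x, ∑ i, (A i).indicator (fun _ ↦ (1 : ℤ)) x = ∑ j, (B j).indicator (fun _ ↦ (1 : ℤ)) x

/-- The set `⟨{x}⟩_Γ`. It belongs to an intersection-closed `Γ` as soon as some member of `Γ`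
contains `x`; otherwise it is the whole space. -/
def pointClosure (Γ : Finset (Set X)) (x : X) : Set X := ⋂₀ {D | D ∈ Γ ∧ x ∈ D}

open scoped Classical in
/-- The value at `x` of the weighted sum `∑ f(U) 1_U` of indicator functions. -/
noncomputable def indicatorSum {Γ : Finset (Set X)} (f : Γ → ℤ) (x : X) : ℤ :=
  ∑ U : Γ with x ∈ U.1, f U

variable {Γ : Finset (Set X)}

lemma pointClosure_subset_iff {U : Set X} (hU : U ∈ Γ) {x : X} :
    pointClosure Γ x ⊆ U ↔ x ∈ U :=
  ⟨fun h ↦ h fun _ hD ↦ hD.2, fun hx ↦ Set.sInter_subset_of_mem ⟨hU, hx⟩⟩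

lemma pointClosure_mem (hΓ : InfClosed (Γ : Set (Set X))) {U : Set X} (hU : U ∈ Γ) {x : X}
    (hx : x ∈ U) : pointClosure Γ x ∈ Γ :=
  hΓ.sInf_mem_of_nonempty (Γ.finite_toSet.subset fun _ hD ↦ hD.1) ⟨U, hU, hx⟩ fun _ hD ↦ hD.1

lemma exists_forall_mem (hΓ : InfClosed (Γ : Set (Set X))) (hne : Γ.Nonempty)
    (hempty : ∅ ∉ Γ) : ∃ b, ∀ U ∈ Γ, b ∈ U := by
  have hmem : ⋂₀ (Γ : Set (Set X)) ∈ Γ := hΓ.sInf_mem_of_nonempty Γ.finite_toSet hne subset_rfl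
  obtain ⟨b, hb⟩ := Set.nonempty_iff_ne_empty.2 (ne_of_mem_of_not_mem hmem hempty)
  exact ⟨b, fun U hU ↦ hb U hU⟩

lemma indicatorSum_eq_upperSum [DecidableLE Γ] {C : Γ} {x : X} (hC : C = pointClosure Γ x)
    (f : Γ → ℤ) : indicatorSum f x = upperSum f C := by
  classical
  refine sum_congr (filter_congr fun U _ ↦ ?_) fun _ _ ↦ rfl
  rw [← pointClosure_subset_iff U.2, ← hC, Subtype.coe_le_coe]

lemma indicatorSum_eq_sum {b : X} (hb : ∀ U ∈ Γ, b ∈ U) (f : Γ → ℤ) :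
    indicatorSum f b = ∑ U, f U := by
  simp [indicatorSum, hb]

lemma isIsometrySolution_iff_indicatorSum_multDiff [DecidableEq Γ] {A : ι → Γ} {B : κ → Γ} :
    IsIsometrySolution (fun i ↦ (A i : Set X)) (fun j ↦ (B j : Set X)) ↔
      ∀ x, indicatorSum (multDiff A B) x = 0 := by
  classical
  refine forall_congr' fun x ↦ ?_
  have h := sum_multDiff_mul A B fun U ↦ U.1.indicator (fun _ ↦ (1 : ℤ)) x
  rw [← sub_eq_zero, ← h]
  simp [indicatorSum, sum_filter, Set.indicator_apply]

lemma card_eq_of_isIsometrySolution {A : ι → Set X} {B : κ → Set X} {b : X}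
    (hA : ∀ i, b ∈ A i) (hB : ∀ j, b ∈ B j) (h : IsIsometrySolution A B) :
    Fintype.card ι = Fintype.card κ := by
  simpa [hA, hB] using h b

lemma finsum_mem_setOf_eq_sum {α M : Type*} [AddCommMonoid M] (s : Finset α) (P : α → Prop)
    [DecidablePred P] (f : α → M) :
    ∑ᶠ a ∈ {a | a ∈ s ∧ P a}, f a = ∑ a : s with P a.1, f a := by
  have hset : {a | a ∈ s ∧ P a} = ((s.filter P : Finset α) : Set α) := by simp
  rw [hset, finsum_mem_coe_finset, sum_filter, sum_filter, ← sum_coe_sort s]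

section MoebiusFunction

variable [LocallyFiniteOrder Γ] [DecidableEq Γ]

lemma indicatorSum_mu (hΓ : InfClosed (Γ : Set (Set X))) {W : Γ}
    (hW : ∀ x, W ≠ pointClosure Γ x) (x : X) : indicatorSum (mu ℤ · W) x = 0 := by
  classical
  by_cases hx : ∃ U ∈ Γ, x ∈ U
  · obtain ⟨U, hU, hxU⟩ := hx
    let C : Γ := ⟨pointClosure Γ x, pointClosure_mem hΓ hU hxU⟩
    have hCW : C ≠ W := fun h ↦ hW x (congrArg Subtype.val h).symm
    rw [indicatorSum_eq_upperSum (C := C) rfl, upperSum_mu, if_neg hCW]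
  · simp_all [indicatorSum]

theorem exists_nontrivial_isIsometrySolution (hΓ : InfClosed (Γ : Set (Set X))) (hempty : ∅ ∉ Γ)
    {W : Γ} (hW : ∀ x, W ≠ pointClosure Γ x) {n : ℕ} (hn : ∑ U, (mu ℤ U W).natAbs = 2 * n) :
    ∃ A B : Fin n → Γ, IsIsometrySolution (fun i ↦ (A i : Set X)) (fun j ↦ (B j : Set X)) ∧
      ¬∃ σ : Fin n ≃ Fin n, ∀ i, A i = B (σ i) := by
  obtain ⟨b, hb⟩ := exists_forall_mem hΓ ⟨W, W.2⟩ hempty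
  have hsum : ∑ U, mu ℤ U W = 0 := by
    rw [← indicatorSum_eq_sum hb, indicatorSum_mu hΓ hW]
  obtain ⟨A, B, hAB⟩ := exists_multDiff_eq hsum hn
  refine ⟨A, B, isIsometrySolution_iff_indicatorSum_multDiff.2 fun x ↦ ?_, fun h ↦ ?_⟩
  · rw [hAB, indicatorSum_mu hΓ hW]
  · have hWW := congrFun (hAB.symm.trans (multDiff_eq_zero_iff.2 h)) W
    simp at hWW

theorem exists_sum_natAbs_mu_le_of_nontrivial (hΓ : InfClosed (Γ : Set (Set X)))
    {A : ι → Γ} {B : κ → Γ}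
    (hAB : IsIsometrySolution (fun i ↦ (A i : Set X)) (fun j ↦ (B j : Set X)))
    (hnt : ¬∃ σ : ι ≃ κ, ∀ i, A i = B (σ i)) :
    ∃ W : Γ, (∀ x, W ≠ pointClosure Γ x) ∧
      ∑ U, (mu ℤ U W).natAbs ≤ Fintype.card ι + Fintype.card κ := by
  classical
  let : SemilatticeInf Γ := Subtype.semilatticeInf fun _ _ hC hD ↦ hΓ hC hD
  obtain ⟨W, hW, hle⟩ :=
    exists_upperSum_ne_zero_and_sum_abs_mu_le (mt multDiff_eq_zero_iff.1 hnt)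
  refine ⟨W, fun x hx ↦ hW ?_, ?_⟩
  · rw [← indicatorSum_eq_upperSum hx, isIsometrySolution_iff_indicatorSum_multDiff.1 hAB]
  · zify
    exact hle.trans (sum_abs_multDiff_le A B)

lemma eq_mu_of_finsum_eq_zero {μ : Set X → Set X → ℤ}
    (hμa : ∀ A ∈ Γ, ∀ B ∈ Γ, ¬A ⊆ B → μ A B = 0) (hμb : ∀ C ∈ Γ, μ C C = 1)
    (hμc : ∀ C ∈ Γ, ∀ D ∈ Γ, C ⊆ D → C ≠ D →
      (∑ᶠ U ∈ {U : Set X | U ∈ Γ ∧ C ⊆ U ∧ U ⊆ D}, μ U D) = 0) (C D : Γ) :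
    μ C D = mu ℤ C D := by
  classical
  let ν : IncidenceAlgebra ℤ Γ := ⟨fun C D ↦ μ C D, fun C D h ↦ hμa C C.2 D D.2 h⟩
  have hν : zeta ℤ * ν = 1 := by
    ext C D hCD
    have hsum : (zeta ℤ * ν : IncidenceAlgebra ℤ Γ) C D = ∑ U ∈ Icc C D, μ U D :=
      sum_congr rfl fun U hU ↦ by simp [(mem_Icc.1 hU).1, ν]
    rcases eq_or_ne C D with rfl | hne
    · simp [hsum, hμb C C.2]
    · have hIcc : Icc C D = ({U | C.1 ⊆ U.1 ∧ U.1 ⊆ D.1} : Finset Γ) := by ext U; simp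
      rw [hsum, hIcc, ← finsum_mem_setOf_eq_sum Γ (fun U ↦ C.1 ⊆ U ∧ U ⊆ D) (μ · D),
        hμc C C.2 D D.2 hCD (Subtype.coe_ne_coe.2 hne), one_apply, if_neg hne]
  rw [left_inv_eq_right_inv (mu_mul_zeta ℤ Γ) hν]
  rfl

lemma finsum_natAbs_eq_sum_natAbs_mu {μ : Set X → Set X → ℤ}
    (hμ : ∀ C D : Γ, μ C D = mu ℤ C D) (W : Γ) :
    ∑ᶠ U ∈ {U | U ∈ Γ ∧ U ⊆ W}, (μ U W).natAbs = ∑ U, (mu ℤ U W).natAbs := by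
  classical
  rw [finsum_mem_setOf_eq_sum Γ (· ⊆ W.1) fun U ↦ (μ U W).natAbs, sum_filter_of_ne]
  · simp only [hμ]
  · intro U _ hU
    rw [hμ, Int.natAbs_ne_zero] at hU
    exact Subtype.coe_le_coe.2 (le_of_ne_zero hU)

end MoebiusFunction

theorem stmt13_general (hinter : ∀ A ∈ Γ, ∀ B ∈ Γ, A ∩ B ∈ Γ) (hempty : ∅ ∉ Γ)
    {μ : Set X → Set X → ℤ} (hμa : ∀ A ∈ Γ, ∀ B ∈ Γ, ¬A ⊆ B → μ A B = 0)
    (hμb : ∀ C ∈ Γ, μ C C = 1)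
    (hμc : ∀ C ∈ Γ, ∀ D ∈ Γ, C ⊆ D → C ≠ D →
      (∑ᶠ U ∈ {U : Set X | U ∈ Γ ∧ C ⊆ U ∧ U ⊆ D}, μ U D) = 0)
    {n : ℕ}
    (hn : IsLeast {k : ℕ | ∃ W ∈ Γ, (∀ x, W ≠ pointClosure Γ x) ∧
      k = ∑ᶠ U ∈ {U : Set X | U ∈ Γ ∧ U ⊆ W}, (μ U W).natAbs} (2 * n)) :
    (∃ U V : Fin n → Set X, (∀ k, U k ∈ Γ) ∧ (∀ k, V k ∈ Γ) ∧ IsIsometrySolution U V ∧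
      ¬∃ σ : Fin n ≃ Fin n, ∀ i, U i = V (σ i)) ∧
    ∀ (p q : ℕ) (A : Fin p → Set X) (B : Fin q → Set X), (∀ k, A k ∈ Γ) → (∀ k, B k ∈ Γ) →
      IsIsometrySolution A B → (¬∃ σ : Fin p ≃ Fin q, ∀ i, A i = B (σ i)) → p = q ∧ n ≤ p := by
  classical
  let : LocallyFiniteOrder Γ := Fintype.toLocallyFiniteOrder
  have hΓ : InfClosed (Γ : Set (Set X)) := fun A hA B hB ↦ hinter A hA B hB
  have hweight := finsum_natAbs_eq_sum_natAbs_mu (eq_mu_of_finsum_eq_zero hμa hμb hμc)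
  obtain ⟨⟨C, hC, hCΛ, hk⟩, hmin⟩ := hn
  constructor
  · lift C to Γ using hC
    rw [hweight] at hk
    obtain ⟨U, V, hUV, hnt⟩ := exists_nontrivial_isIsometrySolution hΓ hempty hCΛ hk.symm
    exact ⟨(U ·), (V ·), fun k ↦ (U k).2, fun k ↦ (V k).2, hUV,
      fun ⟨σ, hσ⟩ ↦ hnt ⟨σ, fun i ↦ Subtype.ext (hσ i)⟩⟩
  · intro p q A B hA hB hAB hnt
    lift A to Fin p → Γ using hA
    lift B to Fin q → Γ using hB
    obtain ⟨b, hb⟩ := exists_forall_mem hΓ ⟨C, hC⟩ hempty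
    have hpq : p = q := by
      simpa only [Fintype.card_fin] using
        card_eq_of_isIsometrySolution (fun i ↦ hb _ (A i).2) (fun j ↦ hb _ (B j).2) hAB
    obtain ⟨W, hWΛ, hle⟩ := exists_sum_natAbs_mu_le_of_nontrivial hΓ hAB
      fun ⟨σ, hσ⟩ ↦ hnt ⟨σ, fun i ↦ congrArg Subtype.val (hσ i)⟩
    have h2n : 2 * n ≤ ∑ U, (mu ℤ U W).natAbs := hmin ⟨W, W.2, hWΛ, (hweight W).symm⟩
    simp only [Fintype.card_fin] at hle
    exact ⟨hpq, by lia⟩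

end Isometry

theorem stmt13 {X : Type*} (Γ : Finset (Set X))
    (hX : Set.univ ∈ Γ)
    (hinter : ∀ A ∈ Γ, ∀ B ∈ Γ, A ∩ B ∈ Γ)
    (hempty : (∅ : Set X) ∉ Γ)
    -- `μ` is the Möbius function of the lattice `(Γ, ⊆)`, characterized by
    -- the three defining properties (a), (b), (c)
    (μ : Set X → Set X → ℤ)
    (hμa : ∀ A ∈ Γ, ∀ B ∈ Γ, ¬A ⊆ B → μ A B = 0)
    (hμb : ∀ C ∈ Γ, μ C C = 1)
    (hμc : ∀ C ∈ Γ, ∀ D ∈ Γ, C ⊆ D → C ≠ D →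
      (∑ᶠ U ∈ {U : Set X | U ∈ Γ ∧ C ⊆ U ∧ U ⊆ D}, μ U D) = 0)
    -- `Λ ≠ ∅`
    (hΛ : ∃ C ∈ Γ, ∀ x : X, C ≠ ⋂₀ {D : Set X | D ∈ Γ ∧ x ∈ D})
    -- `n = min { (1/2) Σ_{U ∈ Γ, U ⊆ W} |μ(U,W)| : W ∈ Λ }`
    (n : ℕ)
    (hn : 2 * n = sInf {k : ℕ | ∃ W ∈ Γ,
      (∀ x : X, W ≠ ⋂₀ {D : Set X | D ∈ Γ ∧ x ∈ D}) ∧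
      k = ∑ᶠ U ∈ {U : Set X | U ∈ Γ ∧ U ⊆ W}, (μ U W).natAbs}) :
    -- there is a nontrivial solution of length `n`
    (∃ U V : Fin n → Set X, (∀ k, U k ∈ Γ) ∧ (∀ k, V k ∈ Γ) ∧
      (∀ x : X,
        (∑ i : Fin n, (U i).indicator (fun _ => (1 : ℤ)) x) =
          ∑ j : Fin n, (V j).indicator (fun _ => (1 : ℤ)) x) ∧
      ¬∃ σ : Fin n ≃ Fin n, ∀ i, U i = V (σ i)) ∧
    -- any nontrivial solution `((A_1,…,A_p), (B_1,…,B_q))` has `p = q ≥ n`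
    (∀ (p q : ℕ) (A : Fin p → Set X) (B : Fin q → Set X),
      (∀ k, A k ∈ Γ) → (∀ k, B k ∈ Γ) →
      (∀ x : X,
        (∑ i : Fin p, (A i).indicator (fun _ => (1 : ℤ)) x) =
          ∑ j : Fin q, (B j).indicator (fun _ => (1 : ℤ)) x) →
      (¬∃ σ : Fin p ≃ Fin q, ∀ i, A i = B (σ i)) →
      p = q ∧ n ≤ p) :=
  let ⟨_, hC, hCΛ⟩ := hΛ
  stmt13_general hinter hempty hμa hμb hμc (hn ▸ isLeast_csInf ⟨_, _, hC, hCΛ, rfl⟩)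
end

section
/- Let G be a group and let A, B, C, D be subgroups of G. The following three statements are equivalent: (1) either (A = C and B = D) or (A = D and B = C); (2) 1_{(G,A)} + 1_{(G,B)} = 1_{(G,C)} + 1_{(G,D)} as functions on G; (3) A ∪ B = C ∪ D and A ∩ B = C ∩ D. -/
/-!
For a value `r` with `r + r ≠ 0` in a left cancellative additive structure, the elements `0`, `r`
and `r + r` are distinct. They are the values of the sum of two `r`-valued indicator functions
outside the union, on the symmetric difference and on the intersection respectively, so this sum
carries the same information as the union together with the intersection.

A subgroup covered by two subgroups lies in one of them, so if `A ∪ B = C ∪ D` then each of the four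
subgroups is contained in one from the opposite pair. These containments and the antisymmetry of `⊆`
force a coincidence between the pairs. The remaining two subgroups then have the same union and the
same intersection with a common set, hence coincide by cancellation in a distributive lattice.
-/

section Indicator

variable {α M : Type*} [AddZeroClass M] {s t u v : Set α} {r : M}

theorem mem_union_iff_indicator_add_indicator_ne_zero (hr : r + r ≠ 0) (x : α) :
    x ∈ s ∪ t ↔ s.indicator (fun _ => r) x + t.indicator (fun _ => r) x ≠ 0 := by
  have hr_ne : r ≠ 0 := fun h => hr (by rw [h, add_zero])
  by_cases hs : x ∈ s <;> by_cases ht : x ∈ t <;> simp [hs, ht, hr, hr_ne]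

theorem mem_inter_iff_indicator_add_indicator_eq_add_self [IsLeftCancelAdd M] (hr : r + r ≠ 0)
    (x : α) :
    x ∈ s ∩ t ↔ s.indicator (fun _ => r) x + t.indicator (fun _ => r) x = r + r := by
  have hr_ne : r ≠ 0 := fun h => hr (by rw [h, add_zero])
  have hr_ne_add : r ≠ r + r := fun h =>
    hr_ne (add_left_cancel (h.symm.trans (add_zero r).symm))
  by_cases hs : x ∈ s <;> by_cases ht : x ∈ t <;> simp [hs, ht, hr.symm, hr_ne_add]

theorem forall_indicator_add_indicator_eq_iff [IsLeftCancelAdd M] (hr : r + r ≠ 0) :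
    (∀ x, s.indicator (fun _ => r) x + t.indicator (fun _ => r) x =
        u.indicator (fun _ => r) x + v.indicator (fun _ => r) x) ↔
      s ∪ t = u ∪ v ∧ s ∩ t = u ∩ v := by
  constructor
  · intro h
    constructor <;> ext x
    · simp only [mem_union_iff_indicator_add_indicator_ne_zero hr, h]
    · simp only [mem_inter_iff_indicator_add_indicator_eq_add_self hr, h]
  · rintro ⟨hunion, hinter⟩ x
    rw [← Set.indicator_union_add_inter_apply, hunion, hinter,
      Set.indicator_union_add_inter_apply]

end Indicator

theorem eq_and_eq_or_eq_and_eq_of_sup_eq_of_inf_eq {L : Type*} [DistribLattice L] {a b c d : L}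
    (hsup : a ⊔ b = c ⊔ d) (hinf : a ⊓ b = c ⊓ d) (ha : a ≤ c ∨ a ≤ d) (hb : b ≤ c ∨ b ≤ d)
    (hc : c ≤ a ∨ c ≤ b) (hd : d ≤ a ∨ d ≤ b) : (a = c ∧ b = d) ∨ (a = d ∧ b = c) := by
  wlog hac : a ≤ c generalizing c d
  · exact (this (hsup.trans (sup_comm c d)) (hinf.trans (inf_comm c d)) ha.symm hb.symm hd hc
      (ha.resolve_left hac)).symm
  rcases hc with hca | hcb
  · obtain rfl : a = c := le_antisymm hac hca
    rw [inf_comm a, inf_comm a] at hinf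
    rw [sup_comm a, sup_comm a] at hsup
    exact Or.inl ⟨rfl, eq_of_inf_eq_sup_eq hinf hsup⟩
  rcases hb with hbc | hbd
  · obtain rfl : b = c := le_antisymm hbc hcb
    rw [inf_comm b] at hinf
    rw [sup_comm b] at hsup
    exact Or.inr ⟨eq_of_inf_eq_sup_eq hinf hsup, rfl⟩
  · have hdb : d ≤ b := calc
      d ≤ c ⊔ d := le_sup_right
      _ = a ⊔ b := hsup.symm
      _ = b := sup_eq_right.mpr (hac.trans hcb)
    obtain rfl : b = d := le_antisymm hbd hdb
    exact Or.inl ⟨eq_of_inf_eq_sup_eq hinf hsup, rfl⟩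

section Subgroup

variable {G : Type*} [Group G]

theorem eq_and_eq_or_eq_and_eq_of_union_eq_of_inter_eq {A B C D : Subgroup G}
    (hunion : (A : Set G) ∪ B = (C : Set G) ∪ D) (hinter : (A : Set G) ∩ B = (C : Set G) ∩ D) :
    (A = C ∧ B = D) ∨ (A = D ∧ B = C) := by
  have hA : A ≤ C ∨ A ≤ D := SubgroupClass.subset_union.mp (hunion ▸ Set.subset_union_left)
  have hB : B ≤ C ∨ B ≤ D := SubgroupClass.subset_union.mp (hunion ▸ Set.subset_union_right)
  have hC : C ≤ A ∨ C ≤ B := SubgroupClass.subset_union.mp (hunion ▸ Set.subset_union_left)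
  have hD : D ≤ A ∨ D ≤ B := SubgroupClass.subset_union.mp (hunion ▸ Set.subset_union_right)
  simp only [← SetLike.coe_set_eq]
  exact eq_and_eq_or_eq_and_eq_of_sup_eq_of_inf_eq hunion hinter hA hB hC hD

theorem stmt14_general {M : Type*} [AddZeroClass M] [IsLeftCancelAdd M] {r : M} (hr : r + r ≠ 0)
    (A B C D : Subgroup G) :
    List.TFAE [
      (A = C ∧ B = D) ∨ (A = D ∧ B = C),
      ∀ g : G,
        (A : Set G).indicator (fun _ => r) g + (B : Set G).indicator (fun _ => r) g =
          (C : Set G).indicator (fun _ => r) g + (D : Set G).indicator (fun _ => r) g,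
      (A : Set G) ∪ B = (C : Set G) ∪ D ∧ (A : Set G) ∩ B = (C : Set G) ∩ D] := by
  tfae_have 1 → 3
  | Or.inl ⟨rfl, rfl⟩ => ⟨rfl, rfl⟩
  | Or.inr ⟨rfl, rfl⟩ => ⟨Set.union_comm _ _, Set.inter_comm _ _⟩
  tfae_have 3 → 1 := fun ⟨hunion, hinter⟩ =>
    eq_and_eq_or_eq_and_eq_of_union_eq_of_inter_eq hunion hinter
  tfae_have 2 ↔ 3 := forall_indicator_add_indicator_eq_iff hr
  tfae_finish

end Subgroup

theorem stmt14 {G : Type*} [Group G] (A B C D : Subgroup G) :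
    -- (1) ↔ (2)
    ((((A = C ∧ B = D) ∨ (A = D ∧ B = C)) ↔
      ∀ g : G,
        (A : Set G).indicator (fun _ => (1 : ℤ)) g +
            (B : Set G).indicator (fun _ => (1 : ℤ)) g =
          (C : Set G).indicator (fun _ => (1 : ℤ)) g +
            (D : Set G).indicator (fun _ => (1 : ℤ)) g)) ∧
    -- (2) ↔ (3)
    ((∀ g : G,
        (A : Set G).indicator (fun _ => (1 : ℤ)) g +
            (B : Set G).indicator (fun _ => (1 : ℤ)) g =
          (C : Set G).indicator (fun _ => (1 : ℤ)) g +
            (D : Set G).indicator (fun _ => (1 : ℤ)) g) ↔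
      ((A : Set G) ∪ (B : Set G) = (C : Set G) ∪ (D : Set G) ∧
        (A : Set G) ∩ (B : Set G) = (C : Set G) ∩ (D : Set G))) := by
  have h := stmt14_general (r := (1 : ℤ)) (by norm_num) A B C D
  exact ⟨h.out 0 1, h.out 1 2⟩
end

section
/- Let M be a strong pseudo-injective left S-module, let n be a positive integer, and let C be an S-submodule of M^n. Assume that at least one of the following five conditions holds: (1) C is finite and soc_S(M) is a cyclic left S-module; (2) all the S-submodules of C are cyclic; (3) C is finite, C has a non-cyclic S-submodule, and n ≤ ζ_S(C) − 1; (4) n ≤ 2; (5) for every proper two-sided ideal Q of S, the quotient ring S/Q is infinite. Then every Hamming weight preserving S-linear map f : C → M^n extends to a Hamming weight isometry ψ ∈ Aut_S(M^n), i.e., ψ restricted to C equals f. -/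
/-- Hamming weight on `M^n`. -/
noncomputable def hwt {n : ℕ} {M : Type*} [Zero M] (α : Fin n → M) : ℕ := Set.ncard {i | α i ≠ 0}

/-- The socle of a module: its largest semisimple submodule. -/
noncomputable def socle (S : Type*) [Ring S] (M : Type*) [AddCommGroup M] [Module S M] :
    Submodule S M :=
  sSup {W : Submodule S M | IsSemisimpleModule S W}

/-!
The kernels of the coordinates of the inclusion `C → M ^ n` and of `f` form two multisets `s`, `t`
of submodules of `C`. That `f` preserves the Hamming weight says that every `x : C` lies in equally
many members of `s` and of `t`. If `s = t`, a permutation `σ` matches the coordinates so that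
corresponding kernels agree; strong pseudo-injectivity then provides automorphisms `τ i` of `M`
relating corresponding coordinates, and `σ` and the `τ i` combine to the required isometry.

To see that `s = t`, it suffices that every submodule `W` lies below equally many members of `s`
and of `t`. This is clear if `W` is cyclic. If `t` has fewer members above `W` than `s`, then the
members of `t` that do not contain `W` cover `W`. At most two submodules never do this, and in
general B. H. Neumann's lemma yields a finite nonzero quotient of `W`, hence a finite quotient ring
of `S`. If `C` is finite, Möbius inversion below a minimal `W` where the numbers differ shows
`∑ U ≤ W, |μ(U, W)| ≤ 2 * n`.

If `C` is finite and the socle of `M` is cyclic, every finite submodule of `M` has a character whose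
kernel contains no nonzero submodule. Pulled back along a coordinate `p`, it becomes an additive
character `ψ` of `C` that is trivial on a submodule `A` exactly if `A ≤ ker p`. Summing `ψ` over all
members of `s` and of `t` shows that the total size of the members below `ker p` is the same for
`s` and `t`; induction from the smallest kernels upwards then gives `s = t`.
-/

section Multiset

variable {α : Type*}

theorem sum_map_filter_le [PartialOrder α] [DecidableLE α] [DecidableLT α] [DecidableEq α]
    (w : α → ℕ) (s : Multiset α) (a : α) :
    ((s.filter (· ≤ a)).map w).sum = ((s.filter (· < a)).map w).sum + s.count a * w a := by
  induction s using Multiset.induction_on with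
  | empty => simp
  | cons b s ih =>
    rcases eq_or_ne b a with rfl | hba
    · simp [ih, add_mul, add_assoc, add_comm (w b)]
    · by_cases hlt : b < a <;> simp [le_iff_lt_or_eq, hba, hba.symm, hlt, ← ih, add_assoc]

theorem eq_of_sum_map_filter_le_eq [PartialOrder α] [DecidableLE α] {w : α → ℕ} (hw : ∀ a, w a ≠ 0)
    {s t : Multiset α}
    (h : ∀ a, a ∈ s ∨ a ∈ t →
      ((s.filter (· ≤ a)).map w).sum = ((t.filter (· ≤ a)).map w).sum) : s = t := by
  classical
  by_contra hne
  have hfin : {a | s.count a ≠ t.count a}.Finite :=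
    (s + t).toFinset.finite_toSet.subset fun a ha => by
      by_contra hmem
      simp_all
  obtain ⟨a, ha, hmin⟩ := hfin.exists_minimal (by simpa [Multiset.ext, Set.Nonempty] using hne)
  have hlt : s.filter (· < a) = t.filter (· < a) := by
    ext b
    by_cases hb : b < a
    · simpa [hb] using not_not.mp fun hne => hb.not_ge (hmin hne hb.le)
    · simp [hb]
  have hmem : a ∈ s ∨ a ∈ t := by
    by_contra hmem
    simp_all
  have := h a hmem
  rw [sum_map_filter_le, sum_map_filter_le, hlt, add_right_inj] at this
  exact ha (Nat.eq_of_mul_eq_mul_right (Nat.pos_of_ne_zero (hw a)) this)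

theorem eq_of_countP_le_eq [PartialOrder α] [DecidableLE α] {s t : Multiset α}
    (h : ∀ a, s.countP (a ≤ ·) = t.countP (a ≤ ·)) : s = t :=
  eq_of_sum_map_filter_le_eq (α := αᵒᵈ) (w := 1) (fun _ => one_ne_zero) fun a _ => by
    simpa [Multiset.countP_eq_card_filter] using! h a

theorem countP_le_countP {p q : α → Prop} [DecidablePred p] [DecidablePred q]
    {s : Multiset α} (h : ∀ a ∈ s, p a → q a) :
    s.countP p ≤ s.countP q := by
  simp only [Multiset.countP_eq_card_filter]
  exact Multiset.card_le_card (Multiset.le_filter.mpr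
    ⟨Multiset.filter_le _ _, fun a ha => h a (Multiset.mem_of_mem_filter ha)
      (Multiset.of_mem_filter ha)⟩)

theorem exists_perm_of_map_univ_eq {ι : Type*} [Fintype ι] {A B : ι → α}
    (h : Finset.univ.val.map A = Finset.univ.val.map B) :
    ∃ σ : Equiv.Perm ι, ∀ i, B (σ i) = A i := by
  classical
  have hfiber (a : α) : Nonempty ({i // A i = a} ≃ {i // B i = a}) := by
    rw [← Fintype.card_eq, Fintype.card_subtype, Fintype.card_subtype]
    simpa [Multiset.count_map, eq_comm, Finset.card, Finset.filter] using
      congrArg (Multiset.count a) h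
  exact ⟨Equiv.ofFiberEquiv fun a => (hfiber a).some, Equiv.ofFiberEquiv_map _⟩

end Multiset

section Moebius

open IncidenceAlgebra Finset

variable {α : Type*}

theorem countP_le_eq_sum_count [PartialOrder α] [OrderTop α] [LocallyFiniteOrder α]
    [DecidableLE α] [DecidableEq α] (s : Multiset α) (a : α) :
    s.countP (a ≤ ·) = ∑ b ∈ Ici a, s.count b := by
  rw [Multiset.countP_eq_card_filter, ← Multiset.sum_count_eq_card (s := Ici a) (by simp)]
  exact sum_congr rfl fun b hb => Multiset.count_filter_of_pos (mem_Ici.mp hb)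

theorem countP_le_map_inf [SemilatticeInf α] [DecidableLE α] (s : Multiset α) {a c : α}
    (hac : a ≤ c) :
    (s.map (· ⊓ c)).countP (a ≤ ·) = s.countP (a ≤ ·) := by
  rw [Multiset.countP_map, Multiset.countP_eq_card_filter]
  simp [hac]

theorem countP_le_map_inf_of_not_le [SemilatticeInf α] [DecidableLE α] (s : Multiset α)
    {a c : α} (hac : ¬ a ≤ c) : (s.map (· ⊓ c)).countP (a ≤ ·) = 0 := by
  simp [Multiset.countP_eq_zero, hac]

theorem count_map_inf_sub_count_map_inf [Lattice α] [OrderTop α] [LocallyFiniteOrder α]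
    [DecidableLE α] [DecidableEq α] {s t : Multiset α} {c : α}
    (hlt : ∀ a < c, s.countP (a ≤ ·) = t.countP (a ≤ ·)) {a : α}
    (hac : a ≤ c) :
    ((s.map (· ⊓ c)).count a : ℤ) - (t.map (· ⊓ c)).count a =
      mu ℤ a c * (s.countP (c ≤ ·) - t.countP (c ≤ ·)) := by
  rw [moebius_inversion_top (𝕜 := ℤ)
    (fun b => ((s.map (· ⊓ c)).count b : ℤ) - (t.map (· ⊓ c)).count b)
    (fun b => ((s.map (· ⊓ c)).countP (b ≤ ·) : ℤ) - (t.map (· ⊓ c)).countP (b ≤ ·))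
    (fun b => by simp [countP_le_eq_sum_count]) a, sum_eq_single c]
  · simp only [countP_le_map_inf _ le_rfl]
  · intro b _ hbc
    by_cases hle : b ≤ c
    · simp [countP_le_map_inf _ hle, hlt b (hle.lt_of_ne hbc)]
    · simp [countP_le_map_inf_of_not_le _ hle]
  · simp [hac]

theorem sum_natAbs_mu_le_card_add_card [Lattice α] [BoundedOrder α] [LocallyFiniteOrder α]
    [DecidableLE α] [DecidableEq α] {s t : Multiset α} {c : α}
    (hlt : ∀ a < c, s.countP (a ≤ ·) = t.countP (a ≤ ·))
    (hc : s.countP (c ≤ ·) ≠ t.countP (c ≤ ·)) :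
    ∑ a ∈ Iic c, (mu ℤ a c).natAbs ≤ s.card + t.card := by
  calc ∑ a ∈ Iic c, (mu ℤ a c).natAbs
      ≤ ∑ a ∈ Iic c, ((s.map (· ⊓ c)).count a + (t.map (· ⊓ c)).count a) := by
        refine sum_le_sum fun a ha => ?_
        have hdiff := congrArg Int.natAbs (count_map_inf_sub_count_map_inf hlt (mem_Iic.mp ha))
        rw [Int.natAbs_mul] at hdiff
        have hpos : 0 < ((s.countP (c ≤ ·) : ℤ) - t.countP (c ≤ ·)).natAbs := by omega
        have := Nat.le_mul_of_pos_right (mu ℤ a c).natAbs hpos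
        omega
    _ = s.card + t.card := by
        rw [sum_add_distrib, Multiset.sum_count_eq_card (by simp),
          Multiset.sum_count_eq_card (by simp), Multiset.card_map, Multiset.card_map]

-- The conditions on `μ` determine it by recursion, so that `mu ℤ` is the only candidate.
theorem le_sum_natAbs_mu [PartialOrder α] [OrderBot α] [LocallyFiniteOrder α]
    [DecidableEq α] {P : α → Prop} {k : ℕ}
    (h : ∀ μ : α → α → ℤ, (∀ a b, ¬ a ≤ b → μ a b = 0) → (∀ a, μ a a = 1) →
      (∀ a b, a ≤ b → a ≠ b → ∑ᶠ c ∈ {c | a ≤ c ∧ c ≤ b}, μ c b = 0) →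
      k ≤ sInf {m | ∃ b, P b ∧ m = ∑ᶠ a ∈ {a | a ≤ b}, (μ a b).natAbs})
    {b : α} (hb : P b) : k ≤ ∑ a ∈ Iic b, (mu ℤ a b).natAbs := by
  have hsum (a b : α) (_ : a ≤ b) (hne : a ≠ b) :
      ∑ᶠ c ∈ {c | a ≤ c ∧ c ≤ b}, mu ℤ c b = 0 := by
    rw [← sum_Icc_mu_left (𝕜 := ℤ) a b |>.trans (if_neg hne), ← finsum_mem_coe_finset, coe_Icc]
    rfl
  refine (h (fun a b => mu ℤ a b) (fun _ _ => (mu ℤ).apply_eq_zero_of_not_le) mu_self hsum).trans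
    (Nat.sInf_le ⟨b, hb, ?_⟩)
  rw [← finsum_mem_coe_finset, coe_Iic]
  rfl

end Moebius

section Cover

variable {S X : Type*} [Ring S] [AddCommGroup X] [Module S X]

open Classical in
/-- Two multisets of submodules have the same multiplicity if every element lies in equally many
members of each, that is, if the sums of the indicator functions of their members agree. -/
def SameMultiplicity (s t : Multiset (Submodule S X)) : Prop :=
  ∀ x : X, s.countP (x ∈ ·) = t.countP (x ∈ ·)

variable {s t : Multiset (Submodule S X)}

theorem SameMultiplicity.symm (h : SameMultiplicity s t) : SameMultiplicity t s :=
  fun x => (h x).symm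

open Classical in
theorem SameMultiplicity.countP_le_eq_of_isPrincipal (h : SameMultiplicity s t)
    {W : Submodule S X} (hW : W.IsPrincipal) : s.countP (W ≤ ·) = t.countP (W ≤ ·) := by
  obtain ⟨g, rfl⟩ := hW
  simpa only [Submodule.span_singleton_le_iff_mem] using h g

open Classical in
theorem SameMultiplicity.exists_mem_not_le (h : SameMultiplicity s t) {W : Submodule S X}
    (hlt : t.countP (W ≤ ·) < s.countP (W ≤ ·)) {x : X} (hx : x ∈ W) :
    ∃ B ∈ t, x ∈ B ∧ ¬ W ≤ B := by
  by_contra! hle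
  refine hlt.not_ge ?_
  calc s.countP (W ≤ ·) ≤ s.countP (x ∈ ·) :=
        countP_le_countP fun A _ hWA => hWA hx
    _ = t.countP (x ∈ ·) := h x
    _ ≤ t.countP (W ≤ ·) := countP_le_countP hle

open Classical in
theorem SameMultiplicity.countP_le_le_of_forall_cover (h : SameMultiplicity s t)
    {W : Submodule S X}
    (hcover : ∀ u ≤ t, (∀ x ∈ W, ∃ B ∈ u, x ∈ B) → ∃ B ∈ u, W ≤ B) :
    s.countP (W ≤ ·) ≤ t.countP (W ≤ ·) := by
  by_contra! hlt
  obtain ⟨B, hB, hWB⟩ := hcover (t.filter (¬ W ≤ ·)) (Multiset.filter_le _ _) fun x hx => by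
    obtain ⟨B, hB, hxB, hWB⟩ := h.exists_mem_not_le hlt hx
    exact ⟨B, Multiset.mem_filter.mpr ⟨hB, hWB⟩, hxB⟩
  exact (Multiset.mem_filter.mp hB).2 hWB

theorem SameMultiplicity.eq_of_forall_cover (h : SameMultiplicity s t)
    (hcover : ∀ (W : Submodule S X) (u : Multiset (Submodule S X)), u ≤ s ∨ u ≤ t →
      (∀ x ∈ W, ∃ B ∈ u, x ∈ B) → ∃ B ∈ u, W ≤ B) : s = t := by
  classical
  exact eq_of_countP_le_eq fun W =>
    (h.countP_le_le_of_forall_cover fun u hu => hcover W u (.inr hu)).antisymm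
      (h.symm.countP_le_le_of_forall_cover fun u hu => hcover W u (.inl hu))

theorem SameMultiplicity.eq_of_forall_isPrincipal (h : SameMultiplicity s t)
    (hX : ∀ W : Submodule S X, W.IsPrincipal) : s = t := by
  classical
  exact eq_of_countP_le_eq fun W => h.countP_le_eq_of_isPrincipal (hX W)

theorem exists_le_of_card_le_two {W : Submodule S X} {u : Multiset (Submodule S X)}
    (hu : u.card ≤ 2) (hcover : ∀ x ∈ W, ∃ B ∈ u, x ∈ B) : ∃ B ∈ u, W ≤ B := by
  obtain hu | hu | hu : u.card = 0 ∨ u.card = 1 ∨ u.card = 2 := by omega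
  · rw [Multiset.card_eq_zero] at hu
    simpa [hu] using hcover 0 W.zero_mem
  · obtain ⟨A, rfl⟩ := Multiset.card_eq_one.mp hu
    simpa [SetLike.le_def] using hcover
  · obtain ⟨A, B, rfl⟩ := Multiset.card_eq_two.mp hu
    simpa using AddSubgroupClass.subset_union.mp fun x hx => by simpa using hcover x hx

theorem subsingleton_of_forall_infinite_quotient
    (hS : ∀ Q : TwoSidedIdeal S, Q ≠ ⊤ → Infinite Q.ringCon.Quotient)
    (T : Type*) [AddCommGroup T] [Module S T] [Finite T] : Subsingleton T := by
  let φ : S →+* AddMonoid.End T := Module.toAddMonoidEnd S T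
  have : Finite (AddMonoid.End T) := Finite.of_injective (β := T → T) _ DFunLike.coe_injective
  have : Finite (TwoSidedIdeal.ker φ).ringCon.Quotient :=
    Finite.of_injective _ (RingCon.kerLift_injective φ)
  have hker : TwoSidedIdeal.ker φ = ⊤ := by
    by_contra hne
    exact (hS _ hne).not_finite this
  have hone : φ 1 = 0 := (TwoSidedIdeal.mem_ker φ).mp (hker ▸ trivial)
  exact subsingleton_of_forall_eq 0 fun a => by
    simpa using DFunLike.congr_fun ((map_one φ).symm.trans hone) a

theorem exists_le_of_forall_infinite_quotient
    (hS : ∀ Q : TwoSidedIdeal S, Q ≠ ⊤ → Infinite Q.ringCon.Quotient)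
    {W : Submodule S X} {u : Multiset (Submodule S X)}
    (hcover : ∀ x ∈ W, ∃ B ∈ u, x ∈ B) : ∃ B ∈ u, W ≤ B := by
  classical
  obtain ⟨B, hB, hindex⟩ := Submodule.exists_finiteIndex_of_cover (s := u.toFinset)
    (p := fun B => B.comap W.subtype) (by
      rw [Set.eq_univ_iff_forall]
      intro x
      simpa using hcover x x.2)
  have : Finite (W ⧸ B.comap W.subtype) := AddSubgroup.finite_quotient_of_finiteIndex
  have := subsingleton_of_forall_infinite_quotient hS (W ⧸ B.comap W.subtype)
  refine ⟨B, Multiset.mem_toFinset.mp hB, ?_⟩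
  rwa [← Submodule.comap_subtype_eq_top, ← Submodule.Quotient.subsingleton_iff]

theorem SameMultiplicity.eq_of_card_add_card_lt_sum_natAbs_mu
    [LocallyFiniteOrder (Submodule S X)] (h : SameMultiplicity s t)
    (hmu : ∀ W : Submodule S X, ¬ W.IsPrincipal →
      s.card + t.card < ∑ U ∈ Finset.Iic W, (IncidenceAlgebra.mu ℤ U W).natAbs) : s = t := by
  classical
  by_contra hne
  have hfin : {W | s.countP (W ≤ ·) ≠ t.countP (W ≤ ·)}.Finite :=
    (Set.finite_Icc ⊥ ⊤).subset fun _ _ => ⟨bot_le, le_top⟩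
  obtain ⟨W, hW, hmin⟩ := hfin.exists_minimal (by
    simpa [Set.Nonempty] using mt eq_of_countP_le_eq hne)
  have hlt : ∀ V < W, s.countP (V ≤ ·) = t.countP (V ≤ ·) := fun V hV =>
    not_not.mp fun hne => hV.not_ge (hmin hne hV.le)
  exact (hmu W fun hprin => hW (h.countP_le_eq_of_isPrincipal hprin)).not_ge
    (sum_natAbs_mu_le_card_add_card hlt hW)

end Cover

section Character

variable {S : Type*} [Ring S]
variable {M N T : Type*} [AddCommGroup M] [Module S M] [AddCommGroup N] [Module S N]
  [AddCommGroup T] [Module S T]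

variable (S) in
/-- A character of a module, with values in `ℚ / ℤ`, is generating if its kernel contains no nonzero
submodule. -/
def IsGeneratingCharacter (χ : M →+ AddCircle (1 : ℚ)) : Prop :=
  ∀ A : Submodule S M, (∀ a ∈ A, χ a = 0) → A = ⊥

theorem isGeneratingCharacter_iff {χ : M →+ AddCircle (1 : ℚ)} :
    IsGeneratingCharacter S χ ↔ ∀ x : M, (∀ s : S, χ (s • x) = 0) → x = 0 := by
  refine ⟨fun h x hx => ?_, fun h A hA => (Submodule.eq_bot_iff A).mpr fun x hx =>
    h x fun s => hA _ (A.smul_mem s hx)⟩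
  refine Submodule.span_singleton_eq_bot.mp (h (Submodule.span S {x}) fun a ha => ?_)
  obtain ⟨s, rfl⟩ := Submodule.mem_span_singleton.mp ha
  exact hx s

-- The witness is `x ↦ ∑ i, c i (trace (x i))`, where `c i` is a character of `D i` with
-- `c i 1 ≠ 0`: the trace of a suitable multiple of a nonzero matrix is `1`.
theorem exists_isGeneratingCharacter_pi_matrix {ι : Type*} [Finite ι] (D : ι → Type*) (d : ι → ℕ)
    [∀ i, DivisionRing (D i)] :
    ∃ χ : (Π i, Matrix (Fin (d i)) (Fin (d i)) (D i)) →+ AddCircle (1 : ℚ),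
      IsGeneratingCharacter (Π i, Matrix (Fin (d i)) (Fin (d i)) (D i)) χ := by
  classical
  have := Fintype.ofFinite ι
  choose c hc using fun i =>
    CharacterModule.exists_character_apply_ne_zero_of_ne_zero (one_ne_zero (α := D i))
  let χ : (Π i, Matrix (Fin (d i)) (Fin (d i)) (D i)) →+ AddCircle (1 : ℚ) :=
    ∑ i, ((c i).comp (Matrix.traceAddMonoidHom (Fin (d i)) (D i))).comp
      (Pi.evalAddMonoidHom (fun i => Matrix (Fin (d i)) (Fin (d i)) (D i)) i)
  have hχ (x) : χ x = ∑ i, c i (x i).trace := AddMonoidHom.finsetSum_apply _ _ _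
  refine ⟨χ, isGeneratingCharacter_iff.mpr fun x hx => ?_⟩
  by_contra! hne
  obtain ⟨i, a, b, hab⟩ : ∃ i a b, x i a b ≠ 0 := by
    by_contra! hzero
    exact hne (funext fun i => Matrix.ext (hzero i))
  have hsingle := hx (Pi.single i (Matrix.single b a (x i a b)⁻¹))
  rw [hχ, Finset.sum_eq_single i (fun j _ hj => by simp [Pi.single_eq_of_ne hj]) (by simp)]
    at hsingle
  exact hc i (by simpa [Matrix.trace_single_mul, hab] using hsingle)

theorem exists_isGeneratingCharacter_self (R : Type*) [Ring R] [IsSemisimpleRing R] :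
    ∃ χ : R →+ AddCircle (1 : ℚ), IsGeneratingCharacter R χ := by
  obtain ⟨n, D, d, _, _, ⟨e⟩⟩ := IsSemisimpleRing.exists_ringEquiv_pi_matrix_divisionRing R
  obtain ⟨χ, hχ⟩ := exists_isGeneratingCharacter_pi_matrix D d
  refine ⟨χ.comp e.toAddMonoidHom, isGeneratingCharacter_iff.mpr fun x hx => ?_⟩
  rw [← map_eq_zero_iff e e.injective]
  refine isGeneratingCharacter_iff.mp hχ _ fun r => ?_
  obtain ⟨r, rfl⟩ := e.surjective r
  rw [smul_eq_mul, ← map_mul]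
  exact hx r

theorem IsGeneratingCharacter.comp_of_injective {χ : N →+ AddCircle (1 : ℚ)}
    (hχ : IsGeneratingCharacter S χ) {f : M →ₗ[S] N} (hf : Function.Injective f) :
    IsGeneratingCharacter S (χ.comp f.toAddMonoidHom) := by
  rw [isGeneratingCharacter_iff] at hχ ⊢
  exact fun x hx => (map_eq_zero_iff f hf).mp (hχ _ fun s => by simpa using! hx s)

theorem exists_isGeneratingCharacter_of_isSemisimpleRing {R : Type*} [Ring R] [Module R T]
    [IsSemisimpleRing R] (hT : Module.IsPrincipal R T) :
    ∃ χ : T →+ AddCircle (1 : ℚ), IsGeneratingCharacter R χ := by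
  obtain ⟨g, hg⟩ := hT
  have hsurj : Function.Surjective (LinearMap.toSpanSingleton R T g) := by
    rw [← LinearMap.range_eq_top, LinearMap.range_toSpanSingleton, hg]
  obtain ⟨l, hl⟩ := IsSemisimpleModule.lifting_property _ hsurj LinearMap.id
  obtain ⟨χ, hχ⟩ := exists_isGeneratingCharacter_self R
  exact ⟨_, hχ.comp_of_injective (LinearMap.injective_of_comp_eq_id _ _ hl)⟩

theorem isSemisimpleRing_range_toAddMonoidEnd [Finite T] [IsSemisimpleModule S T] :
    IsSemisimpleRing (Module.toAddMonoidEnd S T).range := by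
  let R := (Module.toAddMonoidEnd S T).range
  let σ : S →+* R := (Module.toAddMonoidEnd S T).rangeRestrict
  have : RingHomSurjective σ := ⟨RingHom.rangeRestrict_surjective _⟩
  let toR : T →ₛₗ[σ] T := { AddMonoidHom.id T with map_smul' := fun _ _ => rfl }
  have : IsSemisimpleModule R T :=
    (LinearMap.isSemisimpleModule_iff_of_bijective toR Function.bijective_id).mp inferInstance
  exact IsSemisimpleModule.of_injective
    (LinearMap.pi fun t : T => LinearMap.toSpanSingleton R T t)
    fun a b hab => Subtype.ext (AddMonoidHom.ext (congrFun hab))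

theorem exists_isGeneratingCharacter_of_isSemisimpleModule [Finite T] [IsSemisimpleModule S T]
    (hT : Module.IsPrincipal S T) : ∃ χ : T →+ AddCircle (1 : ℚ), IsGeneratingCharacter S χ := by
  have := isSemisimpleRing_range_toAddMonoidEnd (S := S) (T := T)
  obtain ⟨g, hg⟩ := hT
  have hTR : Module.IsPrincipal (Module.toAddMonoidEnd S T).range T :=
    ⟨g, (Submodule.eq_top_iff'.mpr fun x => by
      obtain ⟨s, rfl⟩ := Submodule.mem_span_singleton.mp (hg ▸ Submodule.mem_top : x ∈ _)
      exact Submodule.mem_span_singleton.mpr ⟨⟨_, s, rfl⟩, rfl⟩).symm⟩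
  obtain ⟨χ, hχ⟩ := exists_isGeneratingCharacter_of_isSemisimpleRing hTR
  rw [isGeneratingCharacter_iff] at hχ
  refine ⟨χ, isGeneratingCharacter_iff.mpr fun x hx => hχ x ?_⟩
  rintro ⟨_, s, rfl⟩
  exact hx s

theorem isPrincipal_of_injective [IsSemisimpleModule S N] {f : M →ₗ[S] N}
    (hf : Function.Injective f) (hN : Module.IsPrincipal S N) : Module.IsPrincipal S M := by
  obtain ⟨q, hq⟩ := IsSemisimpleModule.extension_property f hf LinearMap.id
  exact .of_surjective q (LinearMap.surjective_of_comp_eq_id _ _ hq)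

theorem isSemisimpleModule_socle : IsSemisimpleModule S (socle S M) := by
  rw [socle, sSup_eq_iSup]
  exact isSemisimpleModule_biSup_of_isSemisimpleModule_submodule (p := id) fun _ hW => hW

theorem le_socle (W : Submodule S M) [hW : IsSemisimpleModule S W] : W ≤ socle S M :=
  le_sSup hW

theorem map_socle_le (f : M →ₗ[S] N) : (socle S M).map f ≤ socle S N := by
  have := isSemisimpleModule_socle (S := S) (M := M)
  have : IsSemisimpleModule S ((socle S M).map f) := .of_surjective (f.submoduleMap _)
    (f.submoduleMap_surjective _)
  exact le_socle _

theorem isPrincipal_socle_of_injective {f : M →ₗ[S] N} (hf : Function.Injective f)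
    (hN : (socle S N).IsPrincipal) : (socle S M).IsPrincipal := by
  have := isSemisimpleModule_socle (S := S) (M := N)
  rw [← Module.isPrincipal_submodule_iff] at hN ⊢
  exact isPrincipal_of_injective
    (f := f.restrict fun x hx => map_socle_le f (Submodule.mem_map_of_mem hx))
    (fun x y hxy => Subtype.ext (hf (congrArg Subtype.val hxy))) hN

theorem isGeneratingCharacter_of_socle [IsAtomic (Submodule S M)] {χ : M →+ AddCircle (1 : ℚ)}
    (hχ : IsGeneratingCharacter S (χ.comp (socle S M).subtype.toAddMonoidHom)) :
    IsGeneratingCharacter S χ := by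
  intro A hA
  obtain rfl | ⟨E, hE, hEA⟩ := eq_bot_or_exists_atom_le A
  · rfl
  have : IsSimpleModule S E := isSimpleModule_iff_isAtom.mpr hE
  have hbot := hχ (E.comap (socle S M).subtype) fun a ha => hA a (hEA ha)
  refine absurd ((Submodule.eq_bot_iff E).mpr fun x hx => ?_) hE.1
  exact congrArg Subtype.val ((Submodule.eq_bot_iff _).mp hbot ⟨x, le_socle E hx⟩ hx)

theorem exists_isGeneratingCharacter_of_isPrincipal_socle [Finite M]
    (hM : (socle S M).IsPrincipal) : ∃ χ : M →+ AddCircle (1 : ℚ), IsGeneratingCharacter S χ := by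
  have := isSemisimpleModule_socle (S := S) (M := M)
  obtain ⟨χ₀, hχ₀⟩ := exists_isGeneratingCharacter_of_isSemisimpleModule
    (Module.isPrincipal_submodule_iff.mpr hM)
  obtain ⟨χ, rfl⟩ := CharacterModule.dual_surjective_of_injective
    (R := ℤ) (socle S M).subtype.toAddMonoidHom.toIntLinearMap (socle S M).injective_subtype χ₀
  exact ⟨χ, isGeneratingCharacter_of_socle hχ₀⟩

theorem exists_injective_addCircle_rat_real :
    ∃ j : AddCircle (1 : ℚ) →+ AddCircle (1 : ℝ), Function.Injective j := by
  refine ⟨QuotientAddGroup.map _ _ (Rat.castHom ℝ).toAddMonoidHom ?_, ?_⟩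
  · simp [AddSubgroup.zmultiples_le]
  · rw [injective_iff_map_eq_zero]
    intro z hz
    obtain ⟨q, rfl⟩ := QuotientAddGroup.mk_surjective z
    obtain ⟨k, hk⟩ := (AddCircle.coe_eq_zero_iff (1 : ℝ)).mp hz
    exact (AddCircle.coe_eq_zero_iff (1 : ℚ)).mpr
      ⟨k, Rat.cast_injective (α := ℝ) (by simpa using hk)⟩

theorem exists_addChar_addCircle_eq_one_iff :
    ∃ ψ : AddChar (AddCircle (1 : ℚ)) ℂ, ∀ z, ψ z = 1 ↔ z = 0 := by
  obtain ⟨j, hj⟩ := exists_injective_addCircle_rat_real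
  refine ⟨(Circle.coeHom.compAddChar AddCircle.toCircle_addChar).compAddMonoidHom j, fun z => ?_⟩
  rw [← map_eq_zero_iff j hj, ← (AddCircle.injective_toCircle one_ne_zero).eq_iff,
    AddCircle.toCircle_zero, ← Circle.coe_eq_one]
  rfl

end Character

section DoubleCounting

variable {S X M : Type*} [Ring S] [AddCommGroup X] [Module S X] [AddCommGroup M] [Module S M]

theorem exists_addChar_forall_eq_one_iff_le_ker [Finite X] (hM : (socle S M).IsPrincipal)
    (p : X →ₗ[S] M) :
    ∃ ψ : AddChar X ℂ, ∀ A : Submodule S X, (∀ a ∈ A, ψ a = 1) ↔ A ≤ LinearMap.ker p := by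
  have : Finite (LinearMap.range p) := Set.finite_range p
  obtain ⟨χ, hχ⟩ := exists_isGeneratingCharacter_of_isPrincipal_socle
    (isPrincipal_socle_of_injective (LinearMap.range p).injective_subtype hM)
  obtain ⟨ψ, hψ⟩ := exists_addChar_addCircle_eq_one_iff
  refine ⟨ψ.compAddMonoidHom (χ.comp p.rangeRestrict.toAddMonoidHom), fun A => ?_⟩
  have hA : A ≤ LinearMap.ker p ↔ A.map p.rangeRestrict = ⊥ := by
    rw [← le_bot_iff, Submodule.map_le_iff_le_comap, Submodule.comap_bot,
      LinearMap.ker_rangeRestrict]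
  simp only [AddChar.compAddMonoidHom_apply, hψ, hA]
  refine ⟨fun h => hχ _ ?_, fun h a ha => ?_⟩
  · rintro _ ⟨a, ha, rfl⟩
    exact h a ha
  · have : p.rangeRestrict a = 0 := (Submodule.eq_bot_iff _).mp h _ (Submodule.mem_map_of_mem ha)
    simp [this]

open Classical in
theorem sum_map_sum_eq_sum_countP_nsmul [Fintype X] {R : Type*} [AddCommMonoid R]
    (s : Multiset (Submodule S X)) (ψ : X → R) :
    (s.map fun A : Submodule S X => ∑ x : A, ψ x).sum = ∑ x, s.countP (x ∈ ·) • ψ x := by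
  induction s using Multiset.induction_on with
  | empty => simp
  | cons A s ih =>
    have hA : ∑ x : A, ψ x = ∑ x, if x ∈ A then ψ x else 0 := by
      rw [← Finset.sum_filter]
      exact (Finset.sum_subtype _ (by simp) ψ).symm
    simp only [Multiset.map_cons, Multiset.sum_cons, ih, hA, Multiset.countP_cons, add_nsmul,
      Finset.sum_add_distrib, add_comm, ite_smul, one_nsmul, zero_nsmul]

open Classical in
theorem sum_map_card_filter_le_eq [Fintype X] (s : Multiset (Submodule S X)) {W : Submodule S X}
    {ψ : AddChar X ℂ} (hψ : ∀ A : Submodule S X, (∀ a ∈ A, ψ a = 1) ↔ A ≤ W) :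
    (((s.filter (· ≤ W)).map fun A : Submodule S X => Nat.card A).sum : ℂ) =
      ∑ x, s.countP (x ∈ ·) • ψ x := by
  have hsum (A : Submodule S X) : ∑ x : A, ψ x = if A ≤ W then (Nat.card A : ℂ) else 0 := by
    have htriv : ψ.compAddMonoidHom A.subtype.toAddMonoidHom = 0 ↔ A ≤ W := by
      simp [← hψ, AddChar.eq_zero_iff]
    simpa [htriv] using! AddChar.sum_eq_ite (ψ.compAddMonoidHom A.subtype.toAddMonoidHom)
  rw [← sum_map_sum_eq_sum_countP_nsmul]
  simp only [hsum]
  induction s using Multiset.induction_on with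
  | empty => simp
  | cons A s ih => by_cases hA : A ≤ W <;> simp [hA, ← ih, -Nat.card_eq_fintype_card]

theorem SameMultiplicity.eq_of_isPrincipal_socle [Finite X] {s t : Multiset (Submodule S X)}
    (h : SameMultiplicity s t) (hM : (socle S M).IsPrincipal)
    (hker : ∀ A, A ∈ s ∨ A ∈ t → ∃ p : X →ₗ[S] M, LinearMap.ker p = A) : s = t := by
  classical
  have := Fintype.ofFinite X
  refine eq_of_sum_map_filter_le_eq (w := fun A : Submodule S X => Nat.card A)
    (fun A => Nat.card_pos.ne') fun A hA => ?_
  obtain ⟨p, rfl⟩ := hker A hA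
  obtain ⟨ψ, hψ⟩ := exists_addChar_forall_eq_one_iff_le_ker hM p
  have hcard := sum_map_card_filter_le_eq s hψ
  simp only [h _, ← sum_map_card_filter_le_eq t hψ] at hcard
  exact_mod_cast hcard

end DoubleCounting

section Extension

variable {S X M : Type*} [Ring S] [AddCommGroup X] [Module S X] [AddCommGroup M] [Module S M]
variable {n : ℕ}

variable (S M) in
/-- A module is strong pseudo-injective if every injective linear map from a submodule to the
module extends to an automorphism. -/
def IsStrongPseudoInjective : Prop :=
  ∀ B : Submodule S M, ∀ h : B →ₗ[S] M, Function.Injective h → ∃ τ : M ≃ₗ[S] M, ∀ b : B, τ b = h b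

theorem IsStrongPseudoInjective.exists_linearEquiv_of_ker_eq (hM : IsStrongPseudoInjective S M)
    {p q : X →ₗ[S] M} (h : LinearMap.ker p = LinearMap.ker q) :
    ∃ τ : M ≃ₗ[S] M, ∀ x, τ (p x) = q x := by
  have hinj : Function.Injective ((LinearMap.ker p).liftQ q h.le) :=
    LinearMap.ker_eq_bot.mp (Submodule.ker_liftQ_eq_bot _ _ _ h.ge)
  obtain ⟨τ, hτ⟩ := hM (LinearMap.range p)
    ((LinearMap.ker p).liftQ q h.le ∘ₗ p.quotKerEquivRange.symm)
    (hinj.comp p.quotKerEquivRange.symm.injective)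
  refine ⟨τ, fun x => (hτ (p.rangeRestrict x)).trans ?_⟩
  have hx : p.quotKerEquivRange.symm (p.rangeRestrict x) = (LinearMap.ker p).mkQ x :=
    p.quotKerEquivRange.symm_apply_eq.mpr rfl
  simp [hx]

/-- The kernels of the coordinates of a linear map to `M ^ n`, with multiplicities. They encode
the Hamming weights of its values. -/
def coordKernels (f : X →ₗ[S] Fin n → M) : Multiset (Submodule S X) :=
  Finset.univ.val.map fun i => LinearMap.ker (LinearMap.proj i ∘ₗ f)

theorem card_coordKernels (f : X →ₗ[S] Fin n → M) : (coordKernels f).card = n := by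
  simp [coordKernels]

theorem exists_ker_eq_of_mem_coordKernels {f : X →ₗ[S] Fin n → M} {A : Submodule S X}
    (hA : A ∈ coordKernels f) : ∃ p : X →ₗ[S] M, LinearMap.ker p = A := by
  obtain ⟨i, -, hi⟩ := Multiset.mem_map.mp hA
  exact ⟨_, hi⟩

open Classical in
theorem countP_mem_coordKernels_add_hwt (f : X →ₗ[S] Fin n → M) (x : X) :
    (coordKernels f).countP (x ∈ ·) + hwt (f x) = n := by
  have hcount : (coordKernels f).countP (x ∈ ·) = {i | f x i = 0}.ncard := by
    rw [coordKernels, Multiset.countP_map, Set.ncard_eq_toFinset_card']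
    simp [Finset.card, Finset.filter]
  rw [hcount, hwt]
  simpa [Set.compl_ofPred] using Set.ncard_add_ncard_compl {i | f x i = 0}

theorem sameMultiplicity_coordKernels {f g : X →ₗ[S] Fin n → M}
    (h : ∀ x, hwt (f x) = hwt (g x)) : SameMultiplicity (coordKernels f) (coordKernels g) :=
  fun x => Nat.add_right_cancel ((countP_mem_coordKernels_add_hwt f x).trans
    (h x ▸ (countP_mem_coordKernels_add_hwt g x).symm))

/-- The automorphism of `M ^ n` that applies `τ i` to the `i`-th coordinate and moves the result
to coordinate `σ i`. -/
def monomialEquiv (σ : Equiv.Perm (Fin n)) (τ : Fin n → M ≃ₗ[S] M) :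
    (Fin n → M) ≃ₗ[S] (Fin n → M) :=
  LinearEquiv.piCongrRight τ ≪≫ₗ LinearEquiv.funCongrLeft S M σ.symm

theorem monomialEquiv_apply_perm (σ : Equiv.Perm (Fin n)) (τ : Fin n → M ≃ₗ[S] M)
    (α : Fin n → M) (i : Fin n) : monomialEquiv σ τ α (σ i) = τ i (α i) := by
  simp [monomialEquiv, LinearMap.funLeft]

theorem hwt_monomialEquiv (σ : Equiv.Perm (Fin n)) (τ : Fin n → M ≃ₗ[S] M) (α : Fin n → M) :
    hwt (monomialEquiv σ τ α) = hwt α := by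
  rw [hwt, ← Set.ncard_preimage_of_injective_subset_range σ.injective (by simp)]
  simp [monomialEquiv_apply_perm, hwt]

theorem IsStrongPseudoInjective.exists_hwt_isometry (hM : IsStrongPseudoInjective S M)
    {f g : X →ₗ[S] Fin n → M} (h : coordKernels f = coordKernels g) :
    ∃ ψ : (Fin n → M) ≃ₗ[S] (Fin n → M), (∀ α, hwt (ψ α) = hwt α) ∧ ∀ x, ψ (f x) = g x := by
  obtain ⟨σ, hσ⟩ := exists_perm_of_map_univ_eq h
  choose τ hτ using fun i => hM.exists_linearEquiv_of_ker_eq (hσ i).symm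
  refine ⟨monomialEquiv σ τ, hwt_monomialEquiv σ τ, fun x => funext fun i => ?_⟩
  obtain ⟨i, rfl⟩ := σ.surjective i
  exact (monomialEquiv_apply_perm σ τ (f x) i).trans (hτ i x)

theorem SameMultiplicity.coordKernels_eq_of_le_two {f g : X →ₗ[S] Fin n → M}
    (h : SameMultiplicity (coordKernels f) (coordKernels g)) (hn : n ≤ 2) :
    coordKernels f = coordKernels g := by
  refine h.eq_of_forall_cover fun W u hu => exists_le_of_card_le_two (le_trans ?_ hn)
  rcases hu with hu | hu
  · exact (Multiset.card_le_card hu).trans_eq (card_coordKernels f)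
  · exact (Multiset.card_le_card hu).trans_eq (card_coordKernels g)

theorem SameMultiplicity.coordKernels_eq_of_le_zeta [Finite X] {f g : X →ₗ[S] Fin n → M}
    (h : SameMultiplicity (coordKernels f) (coordKernels g))
    (hmu : ∀ μ : Submodule S X → Submodule S X → ℤ, (∀ A B, ¬ A ≤ B → μ A B = 0) →
      (∀ A, μ A A = 1) →
      (∀ A B, A ≤ B → A ≠ B → ∑ᶠ U ∈ {U | A ≤ U ∧ U ≤ B}, μ U B = 0) →
      2 * (n + 1) ≤ sInf {k | ∃ W, (¬ ∃ g : X, W = Submodule.span S {g}) ∧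
        k = ∑ᶠ U ∈ {U | U ≤ W}, (μ U W).natAbs}) : coordKernels f = coordKernels g := by
  classical
  have := Fintype.ofFinite (Submodule S X)
  have : LocallyFiniteOrder (Submodule S X) := Fintype.toLocallyFiniteOrder
  refine h.eq_of_card_add_card_lt_sum_natAbs_mu fun W hW => ?_
  rw [Submodule.isPrincipal_iff] at hW
  have := le_sum_natAbs_mu hmu hW
  rw [card_coordKernels, card_coordKernels]
  omega

end Extension

theorem stmt15 {S : Type*} [Ring S] {M : Type*} [AddCommGroup M] [Module S M]
    -- `M` is strong pseudo-injective
    (hM : ∀ B : Submodule S M, ∀ h : B →ₗ[S] M, Function.Injective h →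
      ∃ τ : M ≃ₗ[S] M, ∀ b : B, τ b = h b)
    (n : ℕ) (hn : 0 < n)
    (C : Submodule S (Fin n → M))
    (hcond :
      -- (1) `C` is finite and `soc_S(M)` is cyclic
      (Finite C ∧ ∃ g : M, socle S M = Submodule.span S {g}) ∨
      -- (2) all `S`-submodules of `C` are cyclic
      (∀ D : Submodule S C, ∃ g : C, D = Submodule.span S {g}) ∨
      -- (3) `C` is finite, has a non-cyclic submodule, and `n ≤ ζ_S(C) - 1`
      (Finite C ∧ (∃ D : Submodule S C, ¬∃ g : C, D = Submodule.span S {g}) ∧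
        ∀ μ : Submodule S C → Submodule S C → ℤ,
          (∀ A B : Submodule S C, ¬A ≤ B → μ A B = 0) →
          (∀ A : Submodule S C, μ A A = 1) →
          (∀ A B : Submodule S C, A ≤ B → A ≠ B →
            (∑ᶠ U ∈ {U : Submodule S C | A ≤ U ∧ U ≤ B}, μ U B) = 0) →
          2 * (n + 1) ≤ sInf {k : ℕ | ∃ W : Submodule S C,
            (¬∃ g : C, W = Submodule.span S {g}) ∧
            k = ∑ᶠ U ∈ {U : Submodule S C | U ≤ W}, (μ U W).natAbs}) ∨
      -- (4) `n ≤ 2`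
      (n ≤ 2) ∨
      -- (5) `S/Q` is infinite for every proper two-sided ideal `Q` of `S`
      (∀ Q : TwoSidedIdeal S, Q ≠ ⊤ → Infinite Q.ringCon.Quotient))
    (f : C →ₗ[S] (Fin n → M))
    (hf : ∀ x : C, hwt (f x) = hwt (x : Fin n → M)) :
    ∃ ψ : (Fin n → M) ≃ₗ[S] (Fin n → M),
      (∀ α : Fin n → M, hwt (ψ α) = hwt α) ∧
      ∀ x : C, ψ (x : Fin n → M) = f x := by
  have h := sameMultiplicity_coordKernels (f := C.subtype) (g := f) fun x => (hf x).symm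
  refine IsStrongPseudoInjective.exists_hwt_isometry hM (f := C.subtype) ?_
  rcases hcond with ⟨_, hsoc⟩ | hcyclic | ⟨_, -, hmu⟩ | hn2 | hS
  · refine h.eq_of_isPrincipal_socle ((Submodule.isPrincipal_iff _).mpr hsoc) fun A hA => ?_
    exact hA.elim exists_ker_eq_of_mem_coordKernels exists_ker_eq_of_mem_coordKernels
  · exact h.eq_of_forall_isPrincipal fun W => (Submodule.isPrincipal_iff W).mpr (hcyclic W)
  · exact h.coordKernels_eq_of_le_zeta hmu
  · exact h.coordKernels_eq_of_le_two hn2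
  · exact h.eq_of_forall_cover fun W u _ => exists_le_of_forall_infinite_quotient hS
end

section
/- Suppose that H satisfies the MacWilliams extension property for (P, ω)-weight. Then: (i) for all γ, θ ∈ H such that wt_{(P,ω)}(a·γ) = wt_{(P,ω)}(a·θ) for all a ∈ S, there exists ψ ∈ GL_{(P,ω)}(H) with ψ(γ) = θ; (ii) if in addition H satisfies Condition (C), then H satisfies Condition (A), (H, P) satisfies Condition (B), and (H, (P,ω)) satisfies Condition (D). -/
def IsIdl {Ω : Type*} [PartialOrder Ω] (I : Set Ω) : Prop := ∀ a b : Ω, a ≤ b → b ∈ I → a ∈ I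

noncomputable def lenP {Ω : Type*} [PartialOrder Ω] (y : Ω) : ℕ :=
  sSup {n : ℕ | ∃ c : Finset Ω, IsChain (· ≤ ·) (c : Set Ω) ∧ y ∈ c ∧ (∀ x ∈ c, x ≤ y) ∧ c.card = n}

def UDP {Ω : Type*} [PartialOrder Ω] (ω : Ω → ℝ) : Prop :=
  ∀ I J : Set Ω, IsIdl I → IsIdl J → (∑ᶠ i ∈ I, ω i) = (∑ᶠ j ∈ J, ω j) →
    ∃ lam : Ω ≃o Ω, J = lam '' I ∧ ∀ i : Ω, ω (lam i) = ω i

noncomputable def wtw {Ω : Type*} [PartialOrder Ω] {H : Ω → Type*} [∀ i, Zero (H i)]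
    (ω : Ω → ℝ) (β : ∀ i, H i) : ℝ :=
  ∑ᶠ i ∈ idl (hsupp β), ω i

def CondA (S : Type*) [Ring S] {Ω : Type*} (H : Ω → Type*)
    [∀ i, AddCommGroup (H i)] [∀ i, Module S (H i)] : Prop :=
  ∀ i : Ω, ∀ B : Submodule S (H i), ∀ h : B →ₗ[S] H i, Function.Injective h →
    ∃ τ : H i ≃ₗ[S] H i, ∀ b : B, τ b = h b

def CondB (S : Type*) [Ring S] {Ω : Type*} [PartialOrder Ω] (H : Ω → Type*)
    [∀ i, AddCommGroup (H i)] [∀ i, Module S (H i)] : Prop :=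
  ∀ k l : Ω, k ≤ l → k ≠ l →
    ∀ A : Submodule S (H l), ∀ f : A →ₗ[S] H k, ∃ g : H l →ₗ[S] H k, ∀ a : A, g a = f a

def CondC (S : Type*) [Ring S] {Ω : Type*} (H : Ω → Type*)
    [∀ i, AddCommGroup (H i)] [∀ i, Module S (H i)] : Prop :=
  ∃ ξ : ∀ i, H i, ξ ≠ 0 ∧ ∀ k l : Ω, ∀ a : S, a • ξ k = 0 ↔ a • ξ l = 0

def CondD (S : Type*) [Ring S] {Ω : Type*} [PartialOrder Ω] (H : Ω → Type*)
    [∀ i, AddCommGroup (H i)] [∀ i, Module S (H i)] (ω : Ω → ℝ) : Prop :=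
  UDP ω ∧ ∀ u v : Ω, lenP u = lenP v → ω u = ω v → Nonempty (H u ≃ₗ[S] H v)

def MEPweight (S : Type*) [Ring S] {Ω : Type*} [PartialOrder Ω] (H : Ω → Type*)
    [∀ i, AddCommGroup (H i)] [∀ i, Module S (H i)] (ω : Ω → ℝ) : Prop :=
  ∀ C : Submodule S (∀ i, H i), ∀ f : C →ₗ[S] (∀ i, H i),
    (∀ x : C, wtw ω (f x) = wtw ω (x : ∀ i, H i)) →
    ∃ φ : (∀ i, H i) ≃ₗ[S] (∀ i, H i),
      (∀ α : ∀ i, H i, wtw ω (φ α) = wtw ω α) ∧ ∀ x : C, φ (x : ∀ i, H i) = f x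

/-
Call `i` the leading index of a vector `α` if it is the greatest element of the support of `α`; then
the weight of `α` is that of the principal ideal of `i`, and this is the least weight of a vector
which is nonzero at `i`. Hence a weight-preserving automorphism sends leading indices to leading
indices and depends, to leading order, only on the leading coefficient: if no `H i` is zero, it acts
on the indices by a weight-preserving order isomorphism `λ`, and it induces isomorphisms
`H i ≃ H (λ i)` on leading coefficients.

The extension property produces such automorphisms from linear maps `h` into `H i`, placed in the
coordinate `i` (Condition (A)), or added below the leading coordinate (Condition (B)), and from the
restrictions of the vector `ξ` of Condition (C) to two ideals of equal weight (Condition (D)).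
-/

section IdealWeight

variable {Ω : Type*}

section OrderedMonoid

variable [Finite Ω] {M : Type*} [AddCommMonoid M] [PartialOrder M] [IsOrderedCancelAddMonoid M]
  {ω : Ω → M}

theorem finsum_mem_strictMono (hω : ∀ i, 0 < ω i) :
    StrictMono fun I : Set Ω => ∑ᶠ i ∈ I, ω i := by
  classical
  cases nonempty_fintype Ω
  intro I J hIJ
  obtain ⟨x, hxJ, hxI⟩ := Set.exists_of_ssubset hIJ
  simp only [finsum_mem_eq_toFinset_sum]
  exact Finset.sum_lt_sum_of_subset (Set.toFinset_subset_toFinset.2 hIJ.subset)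
    (Set.mem_toFinset.2 hxJ) (by simpa using hxI) (hω x) fun j _ _ => (hω j).le

theorem eq_of_subset_of_finsum_mem_le (hω : ∀ i, 0 < ω i) {I J : Set Ω} (hIJ : I ⊆ J)
    (hle : ∑ᶠ i ∈ J, ω i ≤ ∑ᶠ i ∈ I, ω i) : I = J :=
  hIJ.eq_of_not_ssubset fun hlt => (finsum_mem_strictMono hω hlt).not_ge hle

end OrderedMonoid

variable [PartialOrder Ω]

theorem Iic_subset_idl {B : Set Ω} {b : Ω} (hb : b ∈ B) : Set.Iic b ⊆ idl B :=
  fun _ hab => ⟨b, hb, hab⟩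

theorem idl_eq_self {I : Set Ω} (hI : IsIdl I) : idl I = I :=
  Set.Subset.antisymm (fun a ⟨b, hb, hab⟩ => hI a b hab hb) fun a ha => ⟨a, ha, le_rfl⟩

theorem idl_subset_Iic_iff {B : Set Ω} {i : Ω} : idl B ⊆ Set.Iic i ↔ i ∈ upperBounds B :=
  ⟨fun h b hb => h ⟨b, hb, le_rfl⟩, fun h _ ⟨_, hb, hab⟩ => hab.trans (h hb)⟩

theorem idl_eq_Iic_of_isGreatest {B : Set Ω} {i : Ω} (h : IsGreatest B i) : idl B = Set.Iic i :=
  (idl_subset_Iic_iff.2 h.2).antisymm (Iic_subset_idl h.1)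

variable [Finite Ω]

/-- The weight of the principal ideal of `i`. It is the weight of every vector whose support has
greatest element `i`. -/
noncomputable def wtIic {M : Type*} [AddCommMonoid M] (ω : Ω → M) (i : Ω) : M :=
  ∑ᶠ k ∈ Set.Iic i, ω k

theorem wtIic_strictMono {M : Type*} [AddCommMonoid M] [PartialOrder M]
    [IsOrderedCancelAddMonoid M] {ω : Ω → M} (hω : ∀ i, 0 < ω i) : StrictMono (wtIic ω) :=
  fun _ _ hij => finsum_mem_strictMono hω (Set.Iic_ssubset_Iic.2 hij)

theorem map_eq_of_wtIic_map_eq {M : Type*} [AddCancelCommMonoid M] {ω : Ω → M} (lam : Ω ≃o Ω)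
    (h : ∀ i, wtIic ω (lam i) = wtIic ω i) (i : Ω) : ω (lam i) = ω i := by
  have wtIic_eq_add_Iio (j : Ω) : wtIic ω j = ω j + ∑ᶠ k ∈ Set.Iio j, ω k := by
    rw [wtIic, ← Set.Iio_insert, finsum_mem_insert _ (by simp) (Set.toFinite _)]
  induction i using WellFoundedLT.induction with
  | ind i ih =>
    have hIio : ∑ᶠ k ∈ Set.Iio (lam i), ω k = ∑ᶠ k ∈ Set.Iio i, ω k := by
      rw [← OrderIso.image_Iio, finsum_mem_image lam.injective.injOn]
      exact finsum_mem_congr rfl ih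
    have hi := h i
    rw [wtIic_eq_add_Iio, wtIic_eq_add_Iio, hIio] at hi
    exact add_right_cancel hi

end IdealWeight

section Length

variable {Ω : Type*} [PartialOrder Ω] [Finite Ω]

theorem lenP_bddAbove (y : Ω) : BddAbove {n : ℕ | ∃ c : Finset Ω,
    IsChain (· ≤ ·) (c : Set Ω) ∧ y ∈ c ∧ (∀ x ∈ c, x ≤ y) ∧ c.card = n} := by
  cases nonempty_fintype Ω
  refine ⟨Fintype.card Ω, ?_⟩
  rintro _ ⟨c, -, -, -, rfl⟩
  exact Finset.card_le_univ c

theorem card_le_lenP {y : Ω} {c : Finset Ω} (hc : IsChain (· ≤ ·) (c : Set Ω))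
    (hy : IsGreatest (c : Set Ω) y) : c.card ≤ lenP y :=
  le_csSup (lenP_bddAbove y) ⟨c, hc, hy.1, fun _ hx => hy.2 hx, rfl⟩

theorem exists_chain_card_eq_lenP (y : Ω) : ∃ c : Finset Ω,
    IsChain (· ≤ ·) (c : Set Ω) ∧ IsGreatest (c : Set Ω) y ∧ c.card = lenP y := by
  have singleton_chain : ∃ c : Finset Ω,
      IsChain (· ≤ ·) (c : Set Ω) ∧ y ∈ c ∧ (∀ x ∈ c, x ≤ y) ∧ c.card = 1 :=
    ⟨{y}, by simp, by simp, by simp, by simp⟩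
  obtain ⟨c, hc, hyc, hle, hcard⟩ := Nat.sSup_mem ⟨1, singleton_chain⟩ (lenP_bddAbove y)
  exact ⟨c, hc, ⟨hyc, fun _ hx => hle _ hx⟩, hcard⟩

theorem lenP_strictMono : StrictMono (lenP : Ω → ℕ) := by
  classical
  intro a b hab
  obtain ⟨c, hc, ha, hcard⟩ := exists_chain_card_eq_lenP a
  have hb : b ∉ c := fun hb => (ha.2 hb).not_gt hab
  have hle (x : Ω) (hx : x ∈ c) : x ≤ b := (ha.2 hx).trans hab.le
  rw [← Nat.add_one_le_iff, ← hcard, ← Finset.card_insert_of_notMem hb]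
  refine card_le_lenP ?_ ?_ <;> rw [Finset.coe_insert]
  · exact hc.insert fun x hx _ => Or.inr (hle x hx)
  · exact ⟨Set.mem_insert _ _, Set.forall_mem_insert.2 ⟨le_rfl, hle⟩⟩

theorem lenP_le_lenP_map {Ω' : Type*} [PartialOrder Ω'] [Finite Ω'] (f : Ω ↪o Ω') (y : Ω) :
    lenP y ≤ lenP (f y) := by
  obtain ⟨c, hc, hy, hcard⟩ := exists_chain_card_eq_lenP y
  rw [← hcard, ← Finset.card_map f.toEmbedding]
  refine card_le_lenP ?_ ?_ <;> rw [Finset.coe_map]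
  · exact hc.image f
  · exact f.monotone.map_isGreatest hy

theorem isIdl_insert_lenP_lt (w : Ω) : IsIdl (insert w {x : Ω | lenP x < lenP w}) := by
  intro a b hab hb
  rcases hab.eq_or_lt with rfl | hlt
  · exact hb
  · rcases hb with rfl | hb
    · exact Or.inr (lenP_strictMono hlt)
    · exact Or.inr ((lenP_strictMono hlt).trans hb)

end Length

section VectorWeight

variable {Ω : Type*} {H : Ω → Type*}

theorem mem_hsupp [∀ i, Zero (H i)] {α : ∀ i, H i} {i : Ω} : i ∈ hsupp α ↔ α i ≠ 0 :=
  Iff.rfl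

theorem hsupp_single [DecidableEq Ω] [∀ i, Zero (H i)] {i : Ω} {x : H i} (hx : x ≠ 0) :
    hsupp (Pi.single i x) = {i} :=
  Set.ext fun k => by
    rcases eq_or_ne k i with rfl | hk
    · simp [hsupp, hx]
    · simp [hsupp, hk]

theorem isGreatest_hsupp_single [DecidableEq Ω] [PartialOrder Ω] [∀ i, Zero (H i)] {i : Ω}
    {x : H i} (hx : x ≠ 0) : IsGreatest (hsupp (Pi.single i x)) i :=
  hsupp_single hx ▸ isGreatest_singleton

theorem hsupp_add_subset [∀ i, AddZeroClass (H i)] (α β : ∀ i, H i) :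
    hsupp (α + β) ⊆ hsupp α ∪ hsupp β :=
  fun i hi => or_iff_not_imp_left.2 fun hα hβ =>
    hi (by simp [not_not.1 hα, hβ])

theorem hsupp_piecewise_zero [∀ i, Zero (H i)] {ξ : ∀ i, H i} (hξ : ∀ i, ξ i ≠ 0) (I : Set Ω)
    [DecidablePred (· ∈ I)] : hsupp (I.piecewise ξ 0) = I := by
  ext i
  by_cases hi : i ∈ I <;> simp [hsupp, hi, hξ]

variable [PartialOrder Ω] [∀ i, Zero (H i)]

theorem wtw_zero (ω : Ω → ℝ) : wtw ω (0 : ∀ i, H i) = 0 := by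
  simp [wtw, idl, hsupp]

theorem wtw_eq_wtIic {ω : Ω → ℝ} {α : ∀ i, H i} {i : Ω} (h : IsGreatest (hsupp α) i) :
    wtw ω α = wtIic ω i := by
  rw [wtw, idl_eq_Iic_of_isGreatest h, wtIic]

variable [Finite Ω] {ω : Ω → ℝ} (hω : ∀ i, 0 < ω i)
include hω

theorem wtw_eq_zero_iff {α : ∀ i, H i} : wtw ω α = 0 ↔ α = 0 := by
  refine ⟨fun h => funext fun i => ?_, fun h => h ▸ wtw_zero ω⟩
  have hempty : ∅ = idl (hsupp α) :=
    eq_of_subset_of_finsum_mem_le hω (Set.empty_subset _) (by simpa [wtw] using h.le)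
  by_contra hi
  exact hempty.ge (Iic_subset_idl (mem_hsupp.2 hi) Set.self_mem_Iic)

theorem wtIic_le_wtw {α : ∀ i, H i} {i : Ω} (hi : α i ≠ 0) : wtIic ω i ≤ wtw ω α :=
  (finsum_mem_strictMono hω).monotone (Iic_subset_idl hi)

theorem wtw_le_wtIic {α : ∀ i, H i} {i : Ω} (hi : i ∈ upperBounds (hsupp α)) :
    wtw ω α ≤ wtIic ω i :=
  (finsum_mem_strictMono hω).monotone (idl_subset_Iic_iff.2 hi)

theorem isGreatest_hsupp_of_wtw_le {α : ∀ i, H i} {i : Ω} (hi : α i ≠ 0)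
    (h : wtw ω α ≤ wtIic ω i) : IsGreatest (hsupp α) i :=
  ⟨hi, idl_subset_Iic_iff.1 (eq_of_subset_of_finsum_mem_le hω (Iic_subset_idl hi) h).ge⟩

end VectorWeight

section Isometry

variable {Ω : Type*} {S : Type*} [Ring S] {H : Ω → Type*} [∀ i, AddCommGroup (H i)]
  [∀ i, Module S (H i)]

theorem apply_eq_sum_apply_single [Fintype Ω] [DecidableEq Ω]
    (ψ : (∀ i, H i) →ₗ[S] ∀ i, H i) (α : ∀ i, H i) (j : Ω) :
    ψ α j = ∑ i, ψ (Pi.single i (α i)) j := by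
  rw [← Finset.sum_apply, ← map_sum, Finset.univ_sum_single]

theorem exists_apply_single_ne_zero [Finite Ω] [DecidableEq Ω]
    (ψ : (∀ i, H i) →ₗ[S] ∀ i, H i) {α : ∀ i, H i} {j : Ω} (h : ψ α j ≠ 0) :
    ∃ i, α i ≠ 0 ∧ ψ (Pi.single i (α i)) j ≠ 0 := by
  cases nonempty_fintype Ω
  rw [apply_eq_sum_apply_single] at h
  obtain ⟨i, -, hi⟩ := Finset.exists_ne_zero_of_sum_ne_zero h
  exact ⟨i, fun h0 => hi (by simp [h0]), hi⟩

variable [PartialOrder Ω]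

theorem idl_hsupp_apply_subset_image [Finite Ω] {ψ : (∀ i, H i) →ₗ[S] ∀ i, H i} {lam : Ω ≃o Ω}
    (hlam : ∀ i (α : ∀ i, H i), IsGreatest (hsupp α) i → IsGreatest (hsupp (ψ α)) (lam i))
    (α : ∀ i, H i) : idl (hsupp (ψ α)) ⊆ lam '' idl (hsupp α) := by
  classical
  rintro j ⟨b, hb, hjb⟩
  obtain ⟨i, hi, hne⟩ := exists_apply_single_ne_zero ψ hb
  have hbi : b ≤ lam i := (hlam i _ (isGreatest_hsupp_single hi)).2 hne
  exact ⟨lam.symm j, ⟨i, hi, lam.symm_apply_le.2 (hjb.trans hbi)⟩, lam.apply_symm_apply j⟩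

/-- Membership of `ψ` in the group `GL_{(P,ω)}(H)` of weight-preserving automorphisms, spelled out
as in `MEPweight`. -/
def IsWeightIsometry (ω : Ω → ℝ) (ψ : (∀ i, H i) ≃ₗ[S] ∀ i, H i) : Prop :=
  ∀ α, wtw ω (ψ α) = wtw ω α

namespace IsWeightIsometry

variable {ω : Ω → ℝ} {ψ : (∀ i, H i) ≃ₗ[S] ∀ i, H i} (hψ : IsWeightIsometry ω ψ)
include hψ

theorem symm : IsWeightIsometry ω ψ.symm := fun α => by
  rw [← hψ (ψ.symm α), LinearEquiv.apply_symm_apply]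

theorem wtIic_eq {α : ∀ i, H i} {i i' : Ω} (hα : IsGreatest (hsupp α) i)
    (hα' : IsGreatest (hsupp (ψ α)) i') : wtIic ω i' = wtIic ω i := by
  rw [← wtw_eq_wtIic hα, ← wtw_eq_wtIic hα', hψ]

variable [Finite Ω] (hω : ∀ i, 0 < ω i)
include hω

theorem wtIic_le_of_apply_single_ne_zero [DecidableEq Ω] {i j : Ω} {x : H i}
    (h : ψ (Pi.single i x) j ≠ 0) : wtIic ω j ≤ wtIic ω i := by
  have hx : x ≠ 0 := by
    rintro rfl
    simp at h
  calc wtIic ω j ≤ wtw ω (ψ (Pi.single i x)) := wtIic_le_wtw hω h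
    _ = wtIic ω i := by rw [hψ, wtw_eq_wtIic (isGreatest_hsupp_single hx)]

theorem exists_isGreatest_hsupp_apply {α : ∀ i, H i} {i : Ω} (hα : IsGreatest (hsupp α) i) :
    ∃ i', IsGreatest (hsupp (ψ α)) i' := by
  classical
  have hi : ψ.symm (ψ α) i ≠ 0 := by simpa [mem_hsupp] using hα.1
  obtain ⟨i', hi', hne⟩ := exists_apply_single_ne_zero ψ.symm.toLinearMap hi
  refine ⟨i', isGreatest_hsupp_of_wtw_le hω hi' ?_⟩
  rw [hψ, wtw_eq_wtIic hα]
  exact hψ.symm.wtIic_le_of_apply_single_ne_zero hω hne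

-- If `i' ≤ j'` failed, then `ψ (α + β)` would be nonzero at `i'` because `ψ β` vanishes there,
-- while `wtw (α + β) ≤ wtIic j = wtIic j'` leaves no room for an index outside `Set.Iic j'`.
theorem le_of_isGreatest_hsupp {α β : ∀ i, H i} {i j i' j' : Ω} (hα : IsGreatest (hsupp α) i)
    (hβ : IsGreatest (hsupp β) j) (hα' : IsGreatest (hsupp (ψ α)) i')
    (hβ' : IsGreatest (hsupp (ψ β)) j') (hij : i ≤ j) : i' ≤ j' := by
  by_contra hle
  have hβi' : ψ β i' = 0 := by_contra fun h => hle (hβ'.2 h)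
  have hαj' : ψ α j' = 0 := by
    by_contra h
    have hlt : j' < i' := (hα'.2 h).lt_of_not_ge hle
    refine (wtIic_strictMono hω hlt).not_ge ?_
    rw [hψ.wtIic_eq hα hα', hψ.wtIic_eq hβ hβ']
    exact (wtIic_strictMono hω).monotone hij
  have hsum_ub : j ∈ upperBounds (hsupp (α + β)) := fun k hk =>
    (hsupp_add_subset α β hk).elim (fun h => (hα.2 h).trans hij) fun h => hβ.2 h
  have hsum_i' : ψ (α + β) i' ≠ 0 := by simpa [hβi', mem_hsupp] using hα'.1
  have hsum_j' : ψ (α + β) j' ≠ 0 := by simpa [hαj', mem_hsupp] using hβ'.1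
  refine hle ((isGreatest_hsupp_of_wtw_le hω hsum_j' ?_).2 hsum_i')
  rw [hψ, hψ.wtIic_eq hβ hβ']
  exact wtw_le_wtIic hω hsum_ub

theorem le_iff_le {α β : ∀ i, H i} {i j i' j' : Ω} (hα : IsGreatest (hsupp α) i)
    (hβ : IsGreatest (hsupp β) j) (hα' : IsGreatest (hsupp (ψ α)) i')
    (hβ' : IsGreatest (hsupp (ψ β)) j') : i' ≤ j' ↔ i ≤ j :=
  ⟨hψ.symm.le_of_isGreatest_hsupp hω hα' hβ' (by simpa using hα) (by simpa using hβ),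
    hψ.le_of_isGreatest_hsupp hω hα hβ hα' hβ'⟩

theorem isGreatest_hsupp_apply {α β : ∀ i, H i} {i i' : Ω} (hα : IsGreatest (hsupp α) i)
    (hα' : IsGreatest (hsupp (ψ α)) i') (hβ : IsGreatest (hsupp β) i) :
    IsGreatest (hsupp (ψ β)) i' := by
  obtain ⟨j', hβ'⟩ := hψ.exists_isGreatest_hsupp_apply hω hβ
  have : i' = j' := le_antisymm ((hψ.le_iff_le hω hα hβ hα' hβ').2 le_rfl)
    ((hψ.le_iff_le hω hβ hα hβ' hα').2 le_rfl)
  rwa [this]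

theorem apply_eq_apply_single [DecidableEq Ω] {α : ∀ i, H i} {i i' : Ω}
    (hα : IsGreatest (hsupp α) i) (hα' : IsGreatest (hsupp (ψ α)) i') :
    ψ α i' = ψ (Pi.single i (α i)) i' := by
  cases nonempty_fintype Ω
  refine (apply_eq_sum_apply_single ψ.toLinearMap α i').trans
    (Finset.sum_eq_single_of_mem i (Finset.mem_univ i) fun k _ hki => ?_)
  rcases eq_or_ne (α k) 0 with h0 | h0
  · simp [h0]
  · by_contra hne
    have hlt : k < i := (hα.2 h0).lt_of_ne hki
    have hle := hψ.wtIic_le_of_apply_single_ne_zero hω hne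
    rw [hψ.wtIic_eq hα hα'] at hle
    exact (wtIic_strictMono hω hlt).not_ge hle

theorem apply_single_symm_apply_single [DecidableEq Ω] {α : ∀ i, H i} {i i' : Ω}
    (hα : IsGreatest (hsupp α) i) (hα' : IsGreatest (hsupp (ψ α)) i') (y : H i') :
    ψ (Pi.single i (ψ.symm (Pi.single i' y) i)) i' = y := by
  rcases eq_or_ne y 0 with rfl | hy
  · simp
  have hsymm : IsGreatest (hsupp (ψ.symm (Pi.single i' y))) i :=
    hψ.symm.isGreatest_hsupp_apply hω hα' (by simpa using hα) (isGreatest_hsupp_single hy)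
  rw [← hψ.apply_eq_apply_single hω hsymm (by simpa using isGreatest_hsupp_single hy)]
  simp

theorem exists_component_equiv [DecidableEq Ω] {α : ∀ i, H i} {i i' : Ω}
    (hα : IsGreatest (hsupp α) i) (hα' : IsGreatest (hsupp (ψ α)) i') :
    ∃ τ : H i ≃ₗ[S] H i', ∀ x, τ x = ψ (Pi.single i x) i' := by
  let component (φ : (∀ i, H i) ≃ₗ[S] ∀ i, H i) (k l : Ω) : H k →ₗ[S] H l :=
    LinearMap.proj l ∘ₗ φ.toLinearMap ∘ₗ LinearMap.single S H k
  have hα'' : IsGreatest (hsupp (ψ.symm (ψ α))) i := by simpa using hα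
  exact ⟨.ofLinearMap (component ψ i i') (component ψ.symm i' i)
    (LinearMap.ext fun y => hψ.apply_single_symm_apply_single hω hα hα' y)
    (LinearMap.ext fun x => hψ.symm.apply_single_symm_apply_single hω hα' hα'' x), fun _ => rfl⟩

theorem exists_orderIso_isGreatest [∀ i, Nontrivial (H i)] :
    ∃ lam : Ω ≃o Ω, ∀ i (α : ∀ i, H i), IsGreatest (hsupp α) i →
      IsGreatest (hsupp (ψ α)) (lam i) := by
  classical
  choose x hx using fun i => exists_ne (0 : H i)
  have hsingle (i : Ω) := isGreatest_hsupp_single (H := H) (hx i)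
  choose lam hlam using fun i => hψ.exists_isGreatest_hsupp_apply hω (hsingle i)
  let emb : Ω ↪o Ω := .ofMapLEIff lam fun i j =>
    hψ.le_iff_le hω (hsingle i) (hsingle j) (hlam i) (hlam j)
  exact ⟨.ofSurjective emb (Finite.surjective_of_injective emb.injective),
    fun i α hα => hψ.isGreatest_hsupp_apply hω (hsingle i) (hlam i) hα⟩

theorem exists_orderIso [∀ i, Nontrivial (H i)] :
    ∃ lam : Ω ≃o Ω, (∀ i, ω (lam i) = ω i) ∧
      (∀ α, idl (hsupp (ψ α)) = lam '' idl (hsupp α)) ∧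
      ∀ i, Nonempty (H i ≃ₗ[S] H (lam i)) := by
  classical
  obtain ⟨lam, hlam⟩ := hψ.exists_orderIso_isGreatest hω
  choose x hx using fun i => exists_ne (0 : H i)
  have hsingle (i : Ω) := isGreatest_hsupp_single (H := H) (hx i)
  have hωlam : ∀ i, ω (lam i) = ω i := map_eq_of_wtIic_map_eq lam fun i =>
    hψ.wtIic_eq (hsingle i) (hlam i _ (hsingle i))
  refine ⟨lam, hωlam, fun α => ?_, fun i => ?_⟩
  · refine eq_of_subset_of_finsum_mem_le hω
      (idl_hsupp_apply_subset_image (ψ := ψ.toLinearMap) hlam α) ?_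
    rw [finsum_mem_image lam.injective.injOn, finsum_mem_congr rfl fun k _ => hωlam k]
    exact (hψ α).ge
  · exact ⟨(hψ.exists_component_equiv hω (hsingle i) (hlam i _ (hsingle i))).choose⟩

end IsWeightIsometry

end Isometry

section Extension

theorem exists_linearMap_range_of_ker_le {R N P Q : Type*} [Ring R] [AddCommGroup N] [Module R N]
    [AddCommGroup P] [Module R P] [AddCommGroup Q] [Module R Q] {g : N →ₗ[R] P} {f : N →ₗ[R] Q}
    (h : LinearMap.ker g ≤ LinearMap.ker f) :
    ∃ f' : LinearMap.range g →ₗ[R] Q, ∀ x, f' (g.rangeRestrict x) = f x :=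
  ⟨(LinearMap.ker g).liftQ f h ∘ₗ g.quotKerEquivRange.symm.toLinearMap, fun x =>
    congrArg ((LinearMap.ker g).liftQ f h) (g.quotKerEquivRange_symm_apply_image x ⟨x, rfl⟩)⟩

theorem smul_apply_ne_zero_of_annihilators_eq {Ω S : Type*} [Ring S] {H : Ω → Type*}
    [∀ i, AddCommGroup (H i)] [∀ i, Module S (H i)] {ξ : ∀ i, H i}
    (hann : ∀ k l : Ω, ∀ a : S, a • ξ k = 0 ↔ a • ξ l = 0) {a : S} (ha : a • ξ ≠ 0) (i : Ω) :
    a • ξ i ≠ 0 :=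
  fun h0 => ha (funext fun k => (hann i k a).1 h0)

namespace MEPweight

variable {Ω : Type*} [Finite Ω] [PartialOrder Ω] {S : Type*} [Ring S] {H : Ω → Type*}
  [∀ i, AddCommGroup (H i)] [∀ i, Module S (H i)] {ω : Ω → ℝ} (hMEP : MEPweight S H ω)
  (hω : ∀ i, 0 < ω i)
include hMEP hω

theorem exists_isometry_comp_eq {N : Type*} [AddCommGroup N] [Module S N]
    {g f : N →ₗ[S] ∀ i, H i} (h : ∀ x, wtw ω (f x) = wtw ω (g x)) :
    ∃ φ : (∀ i, H i) ≃ₗ[S] ∀ i, H i, IsWeightIsometry ω φ ∧ ∀ x, φ (g x) = f x := by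
  have hker : LinearMap.ker g ≤ LinearMap.ker f := fun x hx => by
    rw [LinearMap.mem_ker, ← wtw_eq_zero_iff hω] at hx ⊢
    rw [h, hx]
  obtain ⟨f', hf'⟩ := exists_linearMap_range_of_ker_le hker
  obtain ⟨φ, hφ, hφf'⟩ := hMEP (LinearMap.range g) f' <| by
    rintro ⟨_, x, rfl⟩
    exact (congrArg (wtw ω) (hf' x)).trans (h x)
  exact ⟨φ, hφ, fun x => (hφf' (g.rangeRestrict x)).trans (hf' x)⟩

theorem exists_isometry_apply_eq {γ θ : ∀ i, H i}
    (h : ∀ a : S, wtw ω (a • γ) = wtw ω (a • θ)) :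
    ∃ ψ : (∀ i, H i) ≃ₗ[S] ∀ i, H i, IsWeightIsometry ω ψ ∧ ψ γ = θ := by
  obtain ⟨ψ, hψ, hψγ⟩ := hMEP.exists_isometry_comp_eq hω
    (g := LinearMap.toSpanSingleton S _ γ) (f := LinearMap.toSpanSingleton S _ θ)
    fun a => (h a).symm
  exact ⟨ψ, hψ, by simpa using hψγ 1⟩

theorem exists_isometry_single_eq [DecidableEq Ω] {l : Ω} {A : Submodule S (H l)}
    {f : A →ₗ[S] ∀ i, H i} (hf : ∀ a, a ≠ 0 → IsGreatest (hsupp (f a)) l) :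
    ∃ φ : (∀ i, H i) ≃ₗ[S] ∀ i, H i, IsWeightIsometry ω φ ∧
      ∀ a : A, φ (Pi.single l (a : H l)) = f a := by
  refine hMEP.exists_isometry_comp_eq hω (g := LinearMap.single S H l ∘ₗ A.subtype) fun a => ?_
  rcases eq_or_ne a 0 with rfl | ha
  · simp only [map_zero]
  · have hsingle := isGreatest_hsupp_single (H := H) (x := (a : H l)) (by simpa using ha)
    exact (wtw_eq_wtIic (hf a ha)).trans (wtw_eq_wtIic hsingle).symm

theorem condA : CondA S H := by
  classical
  intro i B h hinj
  rcases subsingleton_or_nontrivial B with _ | _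
  · exact ⟨.refl S _, fun b => by simp [Subsingleton.elim b 0]⟩
  have hsingle (b : B) (hb : b ≠ 0) : IsGreatest (hsupp (Pi.single i (h b) : ∀ i, H i)) i :=
    isGreatest_hsupp_single ((map_ne_zero_iff h hinj).2 hb)
  obtain ⟨φ, hφ, hφB⟩ :=
    hMEP.exists_isometry_single_eq hω (f := LinearMap.single S H i ∘ₗ h) hsingle
  obtain ⟨b, hb⟩ := exists_ne (0 : B)
  have hφb : IsGreatest (hsupp (φ (Pi.single i (b : H i)))) i := hφB b ▸ hsingle b hb
  obtain ⟨τ, hτ⟩ := hφ.exists_component_equiv hω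
    (isGreatest_hsupp_single (by simpa using hb)) hφb
  exact ⟨τ, fun b => by simp [hτ, hφB]⟩

theorem condB : CondB S H := by
  classical
  intro k l hkl hne A f
  have hgreatest (a : A) (ha : a ≠ 0) : IsGreatest
      (hsupp ((LinearMap.single S H l ∘ₗ A.subtype + LinearMap.single S H k ∘ₗ f) a)) l := by
    refine ⟨by simpa [hsupp, hne.symm] using ha, fun m hm => ?_⟩
    by_contra hml
    have hmk : m ≠ k := fun e => hml (e ▸ hkl)
    have hml' : m ≠ l := fun e => hml e.le
    exact hm (by simp [hmk, hml'])
  obtain ⟨φ, -, hφA⟩ := hMEP.exists_isometry_single_eq hω hgreatest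
  refine ⟨LinearMap.proj k ∘ₗ φ.toLinearMap ∘ₗ LinearMap.single S H l, fun a => ?_⟩
  simpa [hne] using congrFun (hφA a) k

theorem exists_orderIso_image_eq (hC : CondC S H) {I J : Set Ω} (hI : IsIdl I) (hJ : IsIdl J)
    (hIJ : ∑ᶠ i ∈ I, ω i = ∑ᶠ j ∈ J, ω j) :
    ∃ lam : Ω ≃o Ω, J = lam '' I ∧ (∀ i, ω (lam i) = ω i) ∧
      ∀ i, Nonempty (H i ≃ₗ[S] H (lam i)) := by
  classical
  obtain ⟨ξ, hξ0, hann⟩ := hC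
  have hξ (i : Ω) : ξ i ≠ 0 := by
    simpa using smul_apply_ne_zero_of_annihilators_eq hann (a := 1) (by simpa using hξ0) i
  have wtw_smul (a : S) (ha : a • ξ ≠ 0) {K : Set Ω} (hK : IsIdl K) :
      wtw ω (a • K.piecewise ξ 0) = ∑ᶠ i ∈ K, ω i := by
    have hsmul : a • K.piecewise ξ 0 = K.piecewise (a • ξ) 0 := by
      rw [← Set.piecewise_smul, smul_zero]
    have hne (i : Ω) : (a • ξ) i ≠ 0 := smul_apply_ne_zero_of_annihilators_eq hann ha i
    rw [hsmul, wtw, hsupp_piecewise_zero hne, idl_eq_self hK]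
  obtain ⟨ψ, hψ, hψI⟩ := hMEP.exists_isometry_apply_eq hω
    (γ := I.piecewise ξ 0) (θ := J.piecewise ξ 0) fun a => by
      by_cases ha : a • ξ = 0
      · simp [← Set.piecewise_smul, ha]
      · rw [wtw_smul a ha hI, wtw_smul a ha hJ, hIJ]
  have : ∀ i, Nontrivial (H i) := fun i => nontrivial_of_ne _ _ (hξ i)
  obtain ⟨lam, hωlam, hidl, hiso⟩ := hψ.exists_orderIso hω
  refine ⟨lam, ?_, hωlam, hiso⟩
  simpa only [hψI, hsupp_piecewise_zero hξ, idl_eq_self hI, idl_eq_self hJ] using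
    hidl (I.piecewise ξ 0)

theorem condD (hC : CondC S H) : CondD S H ω := by
  refine ⟨fun I J hI hJ hIJ => ?_, fun u v hlen hωuv => ?_⟩
  · obtain ⟨lam, hJ, hωlam, -⟩ := hMEP.exists_orderIso_image_eq hω hC hI hJ hIJ
    exact ⟨lam, hJ, hωlam⟩
  -- The ideals `{x | lenP x < n} ∪ {w}` for `w = u, v` have equal weight, and the element `w` is
  -- recovered from its ideal as the only one of length `n`.
  have hwt : ∑ᶠ i ∈ insert u {x | lenP x < lenP u}, ω i =
      ∑ᶠ i ∈ insert v {x | lenP x < lenP v}, ω i := by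
    rw [finsum_mem_insert _ (by simp) (Set.toFinite _),
      finsum_mem_insert _ (by simp) (Set.toFinite _), hlen, hωuv]
  obtain ⟨lam, himage, -, hiso⟩ := hMEP.exists_orderIso_image_eq hω hC
    (isIdl_insert_lenP_lt u) (isIdl_insert_lenP_lt v) hwt
  have hmem : lam u ∈ insert v {x | lenP x < lenP v} :=
    himage ▸ Set.mem_image_of_mem lam (Set.mem_insert u _)
  have hlam : lam u = v :=
    hmem.resolve_right (hlen ▸ lenP_le_lenP_map lam.toOrderEmbedding u).not_gt
  exact hlam ▸ hiso u

end MEPweight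

end Extension

theorem stmt16_general {Ω : Type*} [Finite Ω] [PartialOrder Ω]
    {S : Type*} [Ring S] {H : Ω → Type*} [∀ i, AddCommGroup (H i)] [∀ i, Module S (H i)]
    (ω : Ω → ℝ) (hω : ∀ i : Ω, 0 < ω i) (hMEP : MEPweight S H ω) :
    (∀ γ θ : ∀ i, H i, (∀ a : S, wtw ω (a • γ) = wtw ω (a • θ)) →
      ∃ ψ : (∀ i, H i) ≃ₗ[S] (∀ i, H i),
        (∀ α : ∀ i, H i, wtw ω (ψ α) = wtw ω α) ∧ ψ γ = θ) ∧
    CondA S H ∧ CondB S H ∧ (CondC S H → CondD S H ω) :=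
  ⟨fun _ _ => hMEP.exists_isometry_apply_eq hω, hMEP.condA hω, hMEP.condB hω, hMEP.condD hω⟩

theorem stmt16 {Ω : Type*} [Fintype Ω] [Nonempty Ω] [PartialOrder Ω]
    {S : Type*} [Ring S] {H : Ω → Type*} [∀ i, AddCommGroup (H i)] [∀ i, Module S (H i)]
    (ω : Ω → ℝ) (hω : ∀ i : Ω, 0 < ω i)
    (hMEP : MEPweight S H ω) :
    -- (i)
    (∀ γ θ : ∀ i, H i, (∀ a : S, wtw ω (a • γ) = wtw ω (a • θ)) →
      ∃ ψ : (∀ i, H i) ≃ₗ[S] (∀ i, H i),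
        (∀ α : ∀ i, H i, wtw ω (ψ α) = wtw ω α) ∧ ψ γ = θ) ∧
    -- (ii)
    (CondC S H → CondA S H ∧ CondB S H ∧ CondD S H ω) := by
  obtain ⟨hi, hA, hB, hD⟩ := stmt16_general ω hω hMEP
  exact ⟨hi, fun hC => ⟨hA, hB, hD hC⟩⟩
end
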